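/- arXiv:1301.5633 — 4 statements merged into one kernel-verified Lean document; each statement's English description precedes it below -/
import Mathlib

section
/- Let x ∈ Γ₊ ∪ Γ₋. If x ∈ Γ₋ then dist(φ(t,x), K) → 0 as t → +∞, and if x ∈ Γ₊ then dist(φ(t,x), K) → 0 as t → −∞. (In particular, if Γ₊ ∪ Γ₋ is nonempty then K is nonempty.) -/
open Filter Metric

/-! If the orbit of `x` eventually stays in the compact set `C`, it converges to its ω-limit set.
The ω-limit set is invariant and contained in `C`, and an invariant subset of `C` consists of points
whose whole orbit stays in `C`, that is, of points of the trapped set. -/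

section

open Topology omegaLimit

theorem tendsto_infDist_nhdsSet {X : Type*} [PseudoMetricSpace X] (s : Set X) :
    Tendsto (infDist · s) (𝓝ˢ s) (𝓝 0) :=
  (continuous_infDist_pt s).tendsto_nhdsSet_nhds fun _ => infDist_zero_of_mem

section OmegaLimit

variable {τ α β : Type*} [TopologicalSpace β] {l : Filter τ} {ϕ : τ → α → β} {C : Set β} {x : α}

theorem omegaLimit_singleton_subset_of_eventually_mem (hC : IsClosed C)
    (hx : ∀ᶠ t in l, ϕ t x ∈ C) : ω l ϕ {x} ⊆ C := fun y hy =>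
  hC.mem_of_mapClusterPt ((mem_omegaLimit_singleton_iff_mapClusterPt l ϕ x y).1 hy) hx

theorem tendsto_nhdsSet_omegaLimit_singleton (hC : IsCompact C)
    (hx : ∀ᶠ t in l, ϕ t x ∈ C) : Tendsto (ϕ · x) l (𝓝ˢ (ω l ϕ {x})) :=
  hC.tendsto_nhdsSet_of_mapClusterPt hx fun y _ hy =>
    (mem_omegaLimit_singleton_iff_mapClusterPt l ϕ x y).2 hy

end OmegaLimit

section TrappedSet

variable {τ X : Type*} [TopologicalSpace τ] [TopologicalSpace X]

/-- The incoming tail `Γ₋` of `C`: the points of `C` whose forward orbit stays in `C`. -/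
def incomingTail [AddZero τ] [LE τ] (ϕ : Flow τ X) (C : Set X) : Set X :=
  {x | x ∈ C ∧ ∀ t : τ, 0 ≤ t → ϕ t x ∈ C}

variable [AddGroup τ]

/-- The outgoing tail `Γ₊` of `C`: the points of `C` whose backward orbit stays in `C`. -/
def outgoingTail [LE τ] (ϕ : Flow τ X) (C : Set X) : Set X :=
  {x | x ∈ C ∧ ∀ t : τ, 0 ≤ t → ϕ (-t) x ∈ C}

/-- The trapped set `K = Γ₊ ∩ Γ₋` of `C`: the points that stay in `C` both forward and backward in
time. -/
def trappedSet [LE τ] (ϕ : Flow τ X) (C : Set X) : Set X :=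
  outgoingTail ϕ C ∩ incomingTail ϕ C

variable {ϕ : Flow τ X} {C : Set X}

theorem subset_trappedSet_of_isInvariant [LE τ] {s : Set X} (hs : IsInvariant ϕ s) (hsC : s ⊆ C) :
    s ⊆ trappedSet ϕ C := fun _ hy =>
  ⟨⟨hsC hy, fun t _ => hsC (hs (-t) hy)⟩, ⟨hsC hy, fun t _ => hsC (hs t hy)⟩⟩

theorem tendsto_nhdsSet_trappedSet_of_eventually_mem [LE τ] (hC : IsCompact C)
    (hC_closed : IsClosed C) {l : Filter τ} (hl : ∀ s, Tendsto (s + ·) l l) {x : X}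
    (hx : ∀ᶠ t in l, ϕ t x ∈ C) : Tendsto (ϕ · x) l (𝓝ˢ (trappedSet ϕ C)) := by
  have h_invariant : IsInvariant ϕ (ω l ϕ {x}) := ϕ.isInvariant_omegaLimit l {x} hl
  have h_subset : ω l ϕ {x} ⊆ C := omegaLimit_singleton_subset_of_eventually_mem hC_closed hx
  exact (tendsto_nhdsSet_omegaLimit_singleton hC hx).mono_right
    (nhdsSet_mono (subset_trappedSet_of_isInvariant h_invariant h_subset))

end TrappedSet

section OrderedTime

variable {τ X : Type*} [TopologicalSpace τ] [AddCommGroup τ] [PartialOrder τ]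
  [IsOrderedAddMonoid τ] [TopologicalSpace X] {ϕ : Flow τ X} {C : Set X} {x : X}

theorem tendsto_atTop_nhdsSet_trappedSet (hC : IsCompact C) (hC_closed : IsClosed C)
    (hx : x ∈ incomingTail ϕ C) : Tendsto (ϕ · x) atTop (𝓝ˢ (trappedSet ϕ C)) :=
  tendsto_nhdsSet_trappedSet_of_eventually_mem hC hC_closed
    (fun s => tendsto_atTop_add_const_left atTop s tendsto_id)
    ((eventually_ge_atTop 0).mono hx.2)

theorem tendsto_atBot_nhdsSet_trappedSet (hC : IsCompact C) (hC_closed : IsClosed C)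
    (hx : x ∈ outgoingTail ϕ C) : Tendsto (ϕ · x) atBot (𝓝ˢ (trappedSet ϕ C)) :=
  tendsto_nhdsSet_trappedSet_of_eventually_mem hC hC_closed
    (fun s => tendsto_atBot_add_const_left atBot s tendsto_id)
    ((eventually_le_atBot 0).mono fun t ht => by simpa using hx.2 (-t) (neg_nonneg.2 ht))

variable (ϕ x) in
/-- Since `𝓝ˢ ∅ = ⊥`, convergence to `𝓝ˢ K` along a nontrivial filter also shows that `K` is
nonempty; convergence of `infDist` to `0` does not, because `infDist y ∅ = 0`. -/
theorem stmt_0_general (hC : IsCompact C) (hC_closed : IsClosed C) :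
    (x ∈ incomingTail ϕ C → Tendsto (ϕ · x) atTop (𝓝ˢ (trappedSet ϕ C))) ∧
    (x ∈ outgoingTail ϕ C → Tendsto (ϕ · x) atBot (𝓝ˢ (trappedSet ϕ C))) :=
  ⟨tendsto_atTop_nhdsSet_trappedSet hC hC_closed, tendsto_atBot_nhdsSet_trappedSet hC hC_closed⟩

end OrderedTime

end

/-- Let `φ` be a continuous flow on a metric space `X`, `C` a compact subset,
`Γ₋`/`Γ₊` the incoming/outgoing tails and `K = Γ₊ ∩ Γ₋` the trapped set.  If `x ∈ Γ₋` then
`dist(φ(t,x), K) → 0` as `t → +∞`, and if `x ∈ Γ₊` then `dist(φ(t,x), K) → 0` as `t → −∞`. -/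
theorem stmt_0 {X : Type*} [MetricSpace X]
    (φ : ℝ → X → X)
    (hφcont : Continuous fun p : ℝ × X => φ p.1 p.2)
    (hφ0 : ∀ x : X, φ 0 x = x)
    (hφadd : ∀ (t s : ℝ) (x : X), φ (t + s) x = φ t (φ s x))
    (C : Set X) (hC : IsCompact C)
    (Γm Γp K : Set X)
    (hΓm : Γm = {x | x ∈ C ∧ ∀ t : ℝ, 0 ≤ t → φ t x ∈ C})
    (hΓp : Γp = {x | x ∈ C ∧ ∀ t : ℝ, 0 ≤ t → φ (-t) x ∈ C})
    (hK : K = Γp ∩ Γm)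
    (x : X) (hx : x ∈ Γp ∪ Γm) :
    (x ∈ Γm → Tendsto (fun t : ℝ => infDist (φ t x) K) atTop (nhds 0)) ∧
    (x ∈ Γp → Tendsto (fun t : ℝ => infDist (φ t x) K) atBot (nhds 0)) := by
  subst hΓm hΓp hK
  let ϕ : Flow ℝ X := ⟨φ, hφcont, hφadd, hφ0⟩
  exact (stmt_0_general ϕ x hC hC.isClosed).imp
    (fun h hxm => (tendsto_infDist_nhdsSet _).comp (h hxm))
    (fun h hxp => (tendsto_infDist_nhdsSet _).comp (h hxp))
end

section
/- For every a ∈ 𝒮(ℝ^{2n}) there exists a constant C > 0 such that for all h ∈ (0,1] and all u ∈ 𝒮(ℝⁿ), ‖Op_h^Λ(a)u‖_{L²(ℝⁿ)} ≤ C h^{−1/2} ‖u‖_{L²(ℝⁿ)}. -/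
open MeasureTheory
open scoped RealInnerProductSpace

/-- Points of `ℝⁿ` (with `n = m + 1 ≥ 1`) are written `(x', xₙ)` with
`x' ∈ ℝ^{n-1} = EuclideanSpace ℝ (Fin m)` and `xₙ ∈ ℝ`. -/
abbrev V (m : ℕ) : Type := EuclideanSpace ℝ (Fin m) × ℝ

/-- The quantization `Op_h^Λ(a)u(x) = (2πh)^{-n} ∫ e^{(i/h)(x'·ξ' - y·ξ)} a(x,ξ) u(y) dy dξ`. -/
noncomputable def OpL (m : ℕ) (h : ℝ) (a : V m × V m → ℂ) (u : V m → ℂ) (x : V m) : ℂ :=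
  ((2 * Real.pi * h) ^ (m + 1))⁻¹ •
    ∫ p : V m × V m,
      Complex.exp (Complex.I *
        Complex.ofReal ((⟪x.1, p.2.1⟫ - (⟪p.1.1, p.2.1⟫ + p.1.2 * p.2.2)) / h)) *
      a (x, p.2) * u p.1

/-!
Integrating out `ξ` turns `OpL` into the integral operator with kernel
`(2πh)⁻ⁿ â(x, (y - (x', 0)) / (2πh))`, where `â` is the Fourier transform of `a` in its second
variable. This kernel is integrable in `y` uniformly in `x` and `h`. In `x`, however, the argument
`y - (x', 0)` only sees `x'`, so rescaling recovers `n - 1` of the `n` powers of `(2πh)⁻¹`, and the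
integrability in `xₙ` comes from the decay of `a` in `x`: the integral over `x` is `O(h⁻¹)`.
Schur's test gives the geometric mean of the two bounds, `O(h^{-1/2})` on `L²` and `O(h^{-1/p})` on
`Lᵖ`.
-/

open Module
open scoped ENNReal SchwartzMap FourierTransform

section SchurTest

variable {α β : Type*} [MeasurableSpace α] [MeasurableSpace β] {μ : Measure α} {ν : Measure β}

theorem rpow_lintegral_mul_le {k u : β → ℝ≥0∞} (hk : AEMeasurable k ν) (hu : AEMeasurable u ν)
    {p : ℝ} (hp : 1 ≤ p) :
    (∫⁻ y, k y * u y ∂ν) ^ p ≤ (∫⁻ y, k y ∂ν) ^ (p - 1) * ∫⁻ y, k y * u y ^ p ∂ν := by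
  have hp0 : 0 < p := by positivity
  have hu' : AEMeasurable u (ν.withDensity k) := hu.mono_ac (withDensity_absolutelyContinuous ν k)
  have lintegral_weighted {g : β → ℝ≥0∞} (hg : AEMeasurable g (ν.withDensity k)) :
      ∫⁻ y, g y ∂ν.withDensity k = ∫⁻ y, k y * g y ∂ν :=
    lintegral_withDensity_eq_lintegral_mul₀' hk hg
  have holder := eLpNorm'_le_eLpNorm'_mul_rpow_measure_univ one_pos hp hu'.aestronglyMeasurable
  rw [withDensity_apply _ .univ, Measure.restrict_univ] at holder
  simp only [eLpNorm', enorm_eq_self, ENNReal.rpow_one, div_one] at holder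
  rw [lintegral_weighted hu', lintegral_weighted (hu'.pow_const p)] at holder
  calc (∫⁻ y, k y * u y ∂ν) ^ p
      ≤ ((∫⁻ y, k y * u y ^ p ∂ν) ^ (1 / p) * (∫⁻ y, k y ∂ν) ^ (1 - 1 / p)) ^ p := by gcongr
    _ = (∫⁻ y, k y ∂ν) ^ (p - 1) * ∫⁻ y, k y * u y ^ p ∂ν := by
      rw [ENNReal.mul_rpow_of_nonneg _ _ hp0.le, ← ENNReal.rpow_mul, ← ENNReal.rpow_mul, mul_comm]
      congr 2 <;> field_simp
      exact ENNReal.rpow_one _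

theorem ae_aemeasurable_prodMk_left [SFinite ν] {k : α → β → ℝ≥0∞}
    (hk : AEMeasurable (Function.uncurry k) (μ.prod ν)) : ∀ᵐ x ∂μ, AEMeasurable (k x) ν :=
  hk.aestronglyMeasurable.prodMk_left.mono fun _ h ↦ h.aemeasurable

theorem lintegral_rpow_lintegral_mul_le [SFinite μ] [SFinite ν] {k : α → β → ℝ≥0∞}
    (hk : AEMeasurable (Function.uncurry k) (μ.prod ν)) {u : β → ℝ≥0∞} (hu : AEMeasurable u ν)
    {A B : ℝ≥0∞} (hA : ∀ᵐ x ∂μ, ∫⁻ y, k x y ∂ν ≤ A) (hB : ∀ᵐ y ∂ν, ∫⁻ x, k x y ∂μ ≤ B)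
    {p : ℝ} (hp : 1 ≤ p) :
    ∫⁻ x, (∫⁻ y, k x y * u y ∂ν) ^ p ∂μ ≤ A ^ (p - 1) * B * ∫⁻ y, u y ^ p ∂ν := by
  have hku : AEMeasurable (fun z : α × β ↦ k z.1 z.2 * u z.2 ^ p) (μ.prod ν) :=
    hk.mul (hu.comp_snd.pow_const p)
  have hky : ∀ᵐ y ∂ν, AEMeasurable (fun x ↦ k x y) μ := ae_aemeasurable_prodMk_left hk.prod_swap
  calc ∫⁻ x, (∫⁻ y, k x y * u y ∂ν) ^ p ∂μ
      ≤ ∫⁻ x, A ^ (p - 1) * ∫⁻ y, k x y * u y ^ p ∂ν ∂μ := by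
        refine lintegral_mono_ae ?_
        filter_upwards [ae_aemeasurable_prodMk_left hk, hA] with x hkx hAx
        grw [rpow_lintegral_mul_le hkx hu hp, hAx]
        linarith
    _ = A ^ (p - 1) * ∫⁻ y, ∫⁻ x, k x y * u y ^ p ∂μ ∂ν := by
        rw [lintegral_const_mul'' _ hku.lintegral_prod_right', lintegral_lintegral_swap hku]
    _ ≤ A ^ (p - 1) * ∫⁻ y, B * u y ^ p ∂ν := by
        refine mul_right_mono (lintegral_mono_ae ?_)
        filter_upwards [hky, hB] with y hky hBy
        grw [lintegral_mul_const'' _ hky, hBy]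
    _ = A ^ (p - 1) * B * ∫⁻ y, u y ^ p ∂ν := by
        rw [lintegral_const_mul'' _ (hu.pow_const p), mul_assoc]

variable {E F : Type*} [NormedAddCommGroup E] [NormedAddCommGroup F]

theorem eLpNorm_top_le_of_enorm_le_lintegral_mul {k : α → β → ℝ≥0∞}
    (hk : ∀ᵐ x ∂μ, AEMeasurable (k x) ν) {A : ℝ≥0∞} (hA : ∀ᵐ x ∂μ, ∫⁻ y, k x y ∂ν ≤ A)
    {T : α → E} {u : β → F} (hT : ∀ᵐ x ∂μ, ‖T x‖ₑ ≤ ∫⁻ y, k x y * ‖u y‖ₑ ∂ν) :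
    eLpNorm T ∞ μ ≤ A * eLpNorm u ∞ ν := by
  rw [eLpNorm_exponent_top, eLpNorm_exponent_top]
  refine essSup_le_of_ae_le _ ?_
  filter_upwards [hk, hA, hT] with x hkx hAx hTx
  calc ‖T x‖ₑ ≤ ∫⁻ y, k x y * ‖u y‖ₑ ∂ν := hTx
    _ ≤ ∫⁻ y, k x y * eLpNormEssSup u ν ∂ν :=
      lintegral_mono_ae ((enorm_ae_le_eLpNormEssSup u ν).mono fun y hy ↦ by gcongr)
    _ ≤ A * eLpNormEssSup u ν := by
      grw [lintegral_mul_const'' _ hkx, hAx]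

/-- **Schur's test**. -/
theorem eLpNorm_le_of_enorm_le_lintegral_mul [SFinite μ] [SFinite ν] {k : α → β → ℝ≥0∞}
    (hk : AEMeasurable (Function.uncurry k) (μ.prod ν)) {A B : ℝ≥0∞}
    (hA : ∀ᵐ x ∂μ, ∫⁻ y, k x y ∂ν ≤ A) (hB : ∀ᵐ y ∂ν, ∫⁻ x, k x y ∂μ ≤ B)
    {T : α → E} {u : β → F} (hu : AEStronglyMeasurable u ν)
    (hT : ∀ᵐ x ∂μ, ‖T x‖ₑ ≤ ∫⁻ y, k x y * ‖u y‖ₑ ∂ν) {p : ℝ≥0∞} (hp : 1 ≤ p) :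
    eLpNorm T p μ ≤ A ^ (1 - p.toReal⁻¹) * B ^ p.toReal⁻¹ * eLpNorm u p ν := by
  rcases eq_or_ne p ∞ with rfl | hp_top
  · simpa using eLpNorm_top_le_of_enorm_le_lintegral_mul (ae_aemeasurable_prodMk_left hk) hA hT
  have hp0 : p ≠ 0 := (one_pos.trans_le hp).ne'
  have hp1 : 1 ≤ p.toReal := by simpa using ENNReal.toReal_mono hp_top hp
  rw [eLpNorm_eq_lintegral_rpow_enorm_toReal hp0 hp_top,
    eLpNorm_eq_lintegral_rpow_enorm_toReal hp0 hp_top, one_div]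
  calc (∫⁻ x, ‖T x‖ₑ ^ p.toReal ∂μ) ^ p.toReal⁻¹
      ≤ (∫⁻ x, (∫⁻ y, k x y * ‖u y‖ₑ ∂ν) ^ p.toReal ∂μ) ^ p.toReal⁻¹ := by
        gcongr ?_ ^ _
        exact lintegral_mono_ae (hT.mono fun x hx ↦ by gcongr)
    _ ≤ (A ^ (p.toReal - 1) * B * ∫⁻ y, ‖u y‖ₑ ^ p.toReal ∂ν) ^ p.toReal⁻¹ := by
        gcongr
        exact lintegral_rpow_lintegral_mul_le hk hu.enorm hA hB hp1
    _ = A ^ (1 - p.toReal⁻¹) * B ^ p.toReal⁻¹ * (∫⁻ y, ‖u y‖ₑ ^ p.toReal ∂ν) ^ p.toReal⁻¹ := by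
        rw [ENNReal.mul_rpow_of_nonneg _ _ (by positivity),
          ENNReal.mul_rpow_of_nonneg _ _ (by positivity), ← ENNReal.rpow_mul]
        congr 3
        field_simp

end SchurTest

section FourierDecay

variable {F G : Type*} [NormedAddCommGroup F] [NormedSpace ℝ F] [FiniteDimensional ℝ F]
  [MeasurableSpace F] [BorelSpace F] [NormedAddCommGroup G] [NormedSpace ℂ G]
  (μ : Measure F) [μ.IsAddHaarMeasure] {L : F →L[ℝ] F →L[ℝ] ℝ}

theorem exists_pow_mul_norm_fourierIntegral_le_of_isCoercive (hL : IsCoercive L) (N : ℕ) :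
    ∃ C ≥ 0, ∀ f : F → G, ContDiff ℝ N f →
      (∀ n ≤ N, Integrable (iteratedFDeriv ℝ n f) μ) → ∀ w,
        ‖w‖ ^ N * ‖VectorFourier.fourierIntegral 𝐞 μ L.toLinearMap₁₂ f w‖ ≤
          C * ∑ n ∈ Finset.range (N + 1), ∫ v, ‖iteratedFDeriv ℝ n f v‖ ∂μ := by
  obtain ⟨c, hc, hcL⟩ := hL
  refine ⟨(2 / c) ^ N, by positivity, fun f hf hf_int w ↦ ?_⟩
  set φ := ‖VectorFourier.fourierIntegral 𝐞 μ L.toLinearMap₁₂ f w‖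
  set S := ∑ n ∈ Finset.range (N + 1), ∫ v, ‖iteratedFDeriv ℝ n f v‖ ∂μ
  have : 0 ≤ S := Finset.sum_nonneg fun n _ ↦ integral_nonneg fun v ↦ norm_nonneg _
  have diagonal_bound : |L w w| ^ N * φ ≤ ‖w‖ ^ N * 2 ^ N * S := by
    have := VectorFourier.pow_mul_norm_iteratedFDeriv_fourierIntegral_le L (K := 0) (N := N) hf
      (μ := μ) (fun k n hk hn ↦ by
        obtain rfl : k = 0 := by simpa using hk
        simpa using (hf_int n (mod_cast hn)).norm) (k := 0) (n := N) le_rfl le_rfl w w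
    simpa [Finset.singleton_product] using this
  rcases (pow_nonneg (norm_nonneg w) N).eq_or_lt' with hw | hw
  · simp only [hw, zero_mul]
    positivity
  refine le_of_mul_le_mul_left ?_ hw
  calc ‖w‖ ^ N * (‖w‖ ^ N * φ)
      = (c⁻¹ * (c * ‖w‖ * ‖w‖)) ^ N * φ := by
        rw [mul_assoc c, inv_mul_cancel_left₀ hc.ne', mul_pow, mul_assoc]
    _ ≤ (c⁻¹ * |L w w|) ^ N * φ := by
        gcongr
        exact (hcL w).trans (le_abs_self _)
    _ ≤ c⁻¹ ^ N * (‖w‖ ^ N * 2 ^ N * S) := by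
        rw [mul_pow, mul_assoc]
        gcongr
    _ = ‖w‖ ^ N * ((2 / c) ^ N * S) := by
        rw [div_eq_mul_inv, mul_pow]
        ring

theorem exists_norm_fourierIntegral_le_of_isCoercive (hL : IsCoercive L) (N : ℕ) {r : ℝ}
    (hr : finrank ℝ F < r) :
    ∃ C ≥ 0, ∀ (f : F → G) (D : ℝ), ContDiff ℝ N f →
      (∀ n ≤ N, ∀ v, ‖iteratedFDeriv ℝ n f v‖ ≤ D * (1 + ‖v‖) ^ (-r)) → ∀ w,
        ‖VectorFourier.fourierIntegral 𝐞 μ L.toLinearMap₁₂ f w‖ ≤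
          C * D * (1 + ‖w‖) ^ (-N : ℝ) := by
  obtain ⟨C₀, hC₀, hC₀L⟩ :=
    exists_pow_mul_norm_fourierIntegral_le_of_isCoercive (G := G) μ hL 0
  obtain ⟨C, hC, hCL⟩ := exists_pow_mul_norm_fourierIntegral_le_of_isCoercive (G := G) μ hL N
  set I := ∫ v, (1 + ‖v‖) ^ (-r) ∂μ
  have : 0 ≤ I := integral_nonneg fun v ↦ by positivity
  refine ⟨2 ^ (N - 1) * (C₀ + C * (N + 1)) * I, by positivity, fun f D hf hfD w ↦ ?_⟩
  have dominant_integrable : Integrable (fun v ↦ D * (1 + ‖v‖) ^ (-r)) μ :=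
    (integrable_one_add_norm hr).const_mul D
  have deriv_integrable (n) (hn : n ≤ N) : Integrable (iteratedFDeriv ℝ n f) μ :=
    dominant_integrable.mono' (hf.continuous_iteratedFDeriv (mod_cast hn)).aestronglyMeasurable
      (.of_forall (hfD n hn))
  have integral_deriv_le (n) (hn : n ≤ N) : ∫ v, ‖iteratedFDeriv ℝ n f v‖ ∂μ ≤ D * I := by
    rw [← integral_const_mul]
    exact integral_mono (deriv_integrable n hn).norm dominant_integrable (hfD n hn)
  set φ := ‖VectorFourier.fourierIntegral 𝐞 μ L.toLinearMap₁₂ f w‖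
  have sup_bound : φ ≤ C₀ * (D * I) := by
    have := hC₀L f (hf.of_le (mod_cast N.zero_le))
      (fun n hn ↦ deriv_integrable n (hn.trans N.zero_le)) w
    rw [pow_zero, one_mul, zero_add, Finset.sum_range_one] at this
    exact this.trans (by gcongr; exact integral_deriv_le 0 N.zero_le)
  have decay_bound : ‖w‖ ^ N * φ ≤ C * ((N + 1) * (D * I)) := by
    refine (hCL f hf deriv_integrable w).trans ?_
    gcongr
    exact (Finset.sum_le_card_nsmul _ _ (D * I) fun n hn ↦
      integral_deriv_le n (Finset.mem_range_succ_iff.mp hn)).trans_eq (by simp)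
  rw [Real.rpow_neg_natCast, zpow_neg, zpow_natCast, ← div_eq_mul_inv, le_div_iff₀' (by positivity)]
  calc (1 + ‖w‖) ^ N * φ ≤ 2 ^ (N - 1) * (1 ^ N + ‖w‖ ^ N) * φ := by
        gcongr
        exact add_pow_le zero_le_one (norm_nonneg w) N
    _ = 2 ^ (N - 1) * (φ + ‖w‖ ^ N * φ) := by ring
    _ ≤ 2 ^ (N - 1) * (C₀ * (D * I) + C * ((N + 1) * (D * I))) := by gcongr
    _ = 2 ^ (N - 1) * (C₀ + C * (N + 1)) * I * D := by ring

end FourierDecay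

section Slice

variable {E F G : Type*} [NormedAddCommGroup E] [NormedSpace ℝ E] [NormedAddCommGroup F]
  [NormedSpace ℝ F] [NormedAddCommGroup G] [NormedSpace ℝ G]

theorem norm_iteratedFDeriv_comp_prodMk_left_le {f : E × F → G} {n : ℕ} (hf : ContDiff ℝ n f)
    (x : E) (v : F) :
    ‖iteratedFDeriv ℝ n (fun ξ ↦ f (x, ξ)) v‖ ≤ ‖iteratedFDeriv ℝ n f (x, v)‖ := by
  have slice_eq :
      (fun ξ ↦ f (x, ξ)) = (fun z ↦ f ((x, 0) + z)) ∘ ContinuousLinearMap.inr ℝ E F := by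
    ext ξ; simp
  rw [slice_eq, ContinuousLinearMap.iteratedFDeriv_comp_right _ (by fun_prop) _ le_rfl,
    iteratedFDeriv_comp_add_left]
  simp only [ContinuousLinearMap.inr_apply, Prod.mk_add_mk, add_zero, zero_add]
  refine (ContinuousMultilinearMap.norm_compContinuousLinearMap_le _ _).trans ?_
  exact mul_le_of_le_one_right (norm_nonneg _) <| Finset.prod_le_one (fun _ _ ↦ norm_nonneg _)
    fun _ _ ↦ ContinuousLinearMap.norm_inr_le_one ..

theorem exists_norm_iteratedFDeriv_slice_le (f : 𝓢(E × F, G)) (k l N : ℕ) :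
    ∃ D ≥ 0, ∀ n ≤ N, ∀ x v, ‖iteratedFDeriv ℝ n (fun ξ ↦ f (x, ξ)) v‖ ≤
      D * (1 + ‖x‖) ^ (-k : ℝ) * (1 + ‖v‖) ^ (-l : ℝ) := by
  refine ⟨2 ^ (k + l) * (Finset.Iic (k + l, N)).sup (fun i ↦ SchwartzMap.seminorm ℝ i.1 i.2) f,
    by positivity, fun n hn x v ↦ ?_⟩
  have joint_decay := SchwartzMap.one_add_le_sup_seminorm_apply (𝕜 := ℝ) (m := (k + l, N)) le_rfl
    hn f (x, v)
  simp only [Real.rpow_neg_natCast, zpow_neg, zpow_natCast]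
  rw [← div_eq_mul_inv, ← div_eq_mul_inv, div_div, le_div_iff₀' (by positivity)]
  refine le_trans ?_ joint_decay
  rw [pow_add]
  gcongr
  · exact norm_fst_le (x, v)
  · exact norm_snd_le (x, v)
  · exact norm_iteratedFDeriv_comp_prodMk_left_le (f.smooth n) x v

theorem hasTemperateGrowth_prodMk_left (x : E) : (Prod.mk x : F → E × F).HasTemperateGrowth := by
  have affine_eq : (Prod.mk x : F → E × F) =
      (fun _ : F ↦ ((x, 0) : E × F)) + ⇑(ContinuousLinearMap.inr ℝ E F) := by
    ext ξ <;> simp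
  rw [affine_eq]
  exact (Function.HasTemperateGrowth.const _).add (ContinuousLinearMap.hasTemperateGrowth _)

theorem integrable_schwartz_slice [FiniteDimensional ℝ F] [MeasurableSpace F] [BorelSpace F]
    (μ : Measure F) [μ.IsAddHaarMeasure] (f : 𝓢(E × F, G)) (x : E) :
    Integrable (fun ξ ↦ f (x, ξ)) μ := by
  have isometry_mk : Isometry (Prod.mk x : F → E × F) :=
    .of_dist_eq fun ξ η ↦ by simp [Prod.dist_eq]
  exact (SchwartzMap.compCLMOfAntilipschitz ℝ (hasTemperateGrowth_prodMk_left x)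
    isometry_mk.antilipschitz f).integrable

end Slice

section PartialFourier

variable {E F G : Type*} [NormedAddCommGroup E] [NormedSpace ℝ E] [NormedAddCommGroup F]
  [NormedSpace ℝ F] [MeasurableSpace F] [NormedAddCommGroup G] [NormedSpace ℂ G]

/-- The Fourier transform of `f : E × F → G` in its second variable, with respect to the pairing
`L` on `F`. -/
noncomputable def partialFourier (μ : Measure F) (L : F →L[ℝ] F →L[ℝ] ℝ) (f : E × F → G) (x : E)
    (w : F) : G :=
  VectorFourier.fourierIntegral 𝐞 μ L.toLinearMap₁₂ (fun ξ ↦ f (x, ξ)) w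

theorem exists_norm_partialFourier_le_of_isCoercive [FiniteDimensional ℝ F] [BorelSpace F]
    (μ : Measure F) [μ.IsAddHaarMeasure] {L : F →L[ℝ] F →L[ℝ] ℝ} (hL : IsCoercive L)
    (f : 𝓢(E × F, G)) (k N : ℕ) :
    ∃ C ≥ 0, ∀ x w, ‖partialFourier μ L f x w‖ ≤
      C * (1 + ‖x‖) ^ (-k : ℝ) * (1 + ‖w‖) ^ (-N : ℝ) := by
  obtain ⟨D, hD, hfD⟩ := exists_norm_iteratedFDeriv_slice_le f k (finrank ℝ F + 1) N
  obtain ⟨C, hC, hCL⟩ := exists_norm_fourierIntegral_le_of_isCoercive (G := G) μ hL N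
    (r := (finrank ℝ F + 1 : ℕ)) (mod_cast Nat.lt_succ_self _)
  refine ⟨C * D, by positivity, fun x w ↦ ?_⟩
  rw [mul_assoc C]
  exact hCL _ _ ((f.smooth N).comp (contDiff_prodMk_right x)) (fun n hn ↦ hfD n hn x) w

end PartialFourier

section ProdInner

variable {E F : Type*} [NormedAddCommGroup E] [InnerProductSpace ℝ E] [NormedAddCommGroup F]
  [InnerProductSpace ℝ F]

variable (E F) in
/-- The Euclidean pairing of `E × F`, as a bilinear form because `E × F` carries the sup norm and is
not an inner product space. -/
noncomputable def prodInner : (E × F) →L[ℝ] (E × F) →L[ℝ] ℝ :=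
  (innerSL ℝ).bilinearComp (.fst ℝ E F) (.fst ℝ E F) +
    (innerSL ℝ).bilinearComp (.snd ℝ E F) (.snd ℝ E F)

theorem prodInner_apply (v w : E × F) : prodInner E F v w = ⟪v.1, w.1⟫ + ⟪v.2, w.2⟫ := rfl

theorem isCoercive_prodInner : IsCoercive (prodInner E F) := by
  refine ⟨1, one_pos, fun w ↦ ?_⟩
  rw [one_mul, prodInner_apply, real_inner_self_eq_norm_mul_norm, real_inner_self_eq_norm_mul_norm,
    Prod.norm_def]
  rcases max_choice ‖w.1‖ ‖w.2‖ with h | h <;> rw [h]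
  · exact le_add_of_nonneg_right (by positivity)
  · exact le_add_of_nonneg_left (by positivity)

end ProdInner

section DecayIntegral

variable {E : Type*} [NormedAddCommGroup E] [MeasurableSpace E] (μ : Measure E)

/-- The integral of `(1 + ‖x‖)⁻ʳ`, the constant in the bounds for kernels of polynomial decay. -/
noncomputable def decayIntegral (r : ℝ) : ℝ≥0∞ := ∫⁻ x, ENNReal.ofReal ((1 + ‖x‖) ^ (-r)) ∂μ

variable [NormedSpace ℝ E] [FiniteDimensional ℝ E] [BorelSpace E] [μ.IsAddHaarMeasure]

theorem decayIntegral_ne_top {r : ℝ} (hr : finrank ℝ E < r) : decayIntegral μ r ≠ ∞ :=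
  (finite_integral_one_add_norm hr).ne

theorem lintegral_comp_smul_sub (f : E → ℝ≥0∞) {c : ℝ} (hc : 0 < c) (x₀ : E) :
    ∫⁻ x, f (c • (x - x₀)) ∂μ = ENNReal.ofReal (c ^ finrank ℝ E)⁻¹ * ∫⁻ x, f x ∂μ := by
  rw [lintegral_sub_right_eq_self (fun x ↦ f (c • x)) x₀,
    ← (measurableEmbedding_const_smul₀ hc.ne').lintegral_map (μ := μ) f,
    Measure.map_addHaar_smul μ hc.ne', lintegral_smul_measure, abs_of_pos (by positivity),
    smul_eq_mul]

theorem lintegral_decay_comp_smul_sub {c : ℝ} (hc : 0 < c) (r : ℝ) (x₀ : E) :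
    ∫⁻ x, ENNReal.ofReal ((1 + ‖c • (x - x₀)‖) ^ (-r)) ∂μ =
      ENNReal.ofReal (c ^ finrank ℝ E)⁻¹ * decayIntegral μ r :=
  lintegral_comp_smul_sub μ (fun x ↦ ENNReal.ofReal ((1 + ‖x‖) ^ (-r))) hc x₀

end DecayIntegral

section RestrictionKernel

variable {E F : Type*} [NormedAddCommGroup E] [NormedSpace ℝ E] [NormedAddCommGroup F]
  [NormedSpace ℝ F] {c r s : ℝ}

/-- A kernel in which `y` is concentrated near `(x.1, 0)` at scale `c⁻¹` and `x.2` near `0` at unit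
scale: as `c → ∞` it approximates, up to a constant, restriction to `E × {0}` followed by
multiplication by `(1 + ‖x.2‖)⁻ˢ`. -/
noncomputable def restrictionKernel (c r s : ℝ) (x y : E × F) : ℝ :=
  c ^ finrank ℝ (E × F) * (1 + ‖x.2‖) ^ (-s) * (1 + ‖c • (y - (x.1, 0))‖) ^ (-r)

theorem restrictionKernel_le_of_nonneg (hc : 0 ≤ c) (hs : 0 ≤ s) (x y : E × F) :
    restrictionKernel c r s x y ≤
      c ^ finrank ℝ (E × F) * (1 + ‖c • (y - (x.1, 0))‖) ^ (-r) := by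
  have decay_le_one : (1 + ‖x.2‖) ^ (-s) ≤ 1 :=
    Real.rpow_le_one_of_one_le_of_nonpos (by simp) (neg_nonpos.mpr hs)
  unfold restrictionKernel
  gcongr
  exact mul_le_of_le_one_right (by positivity) decay_le_one

theorem restrictionKernel_le_mul (hc : 0 ≤ c) (hr : 0 ≤ r) (x y : E × F) :
    restrictionKernel c r s x y ≤
      c ^ finrank ℝ (E × F) * ((1 + ‖c • (x.1 - y.1)‖) ^ (-r) * (1 + ‖x.2‖) ^ (-s)) := by
  have norm_fst_component_le : ‖c • (x.1 - y.1)‖ ≤ ‖c • (y - (x.1, 0))‖ := by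
    rw [norm_smul, norm_smul, norm_sub_rev]
    gcongr
    exact norm_fst_le (y - (x.1, 0))
  rw [restrictionKernel, mul_assoc, mul_comm ((1 + ‖x.2‖) ^ (-s))]
  gcongr ?_ * (?_ * ?_)
  exact Real.rpow_le_rpow_of_nonpos (by positivity) (by gcongr) (neg_nonpos.mpr hr)

variable [FiniteDimensional ℝ E] [MeasurableSpace E] [BorelSpace E]
  [FiniteDimensional ℝ F] [MeasurableSpace F] [BorelSpace F]

theorem measurable_restrictionKernel :
    Measurable (Function.uncurry (restrictionKernel (E := E) (F := F) c r s)) := by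
  unfold Function.uncurry restrictionKernel
  fun_prop

variable (μ : Measure E) [μ.IsAddHaarMeasure] (ν : Measure F) [ν.IsAddHaarMeasure]

theorem lintegral_restrictionKernel_right_le (hc : 0 < c) (hs : 0 ≤ s) (x : E × F) :
    ∫⁻ y, ENNReal.ofReal (restrictionKernel c r s x y) ∂μ.prod ν ≤
      decayIntegral (μ.prod ν) r := by
  set d := finrank ℝ (E × F)
  calc ∫⁻ y, ENNReal.ofReal (restrictionKernel c r s x y) ∂μ.prod ν
      ≤ ∫⁻ y, ENNReal.ofReal (c ^ d) *
          ENNReal.ofReal ((1 + ‖c • (y - (x.1, 0))‖) ^ (-r)) ∂μ.prod ν := by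
        gcongr with y
        rw [← ENNReal.ofReal_mul (by positivity)]
        exact ENNReal.ofReal_le_ofReal (restrictionKernel_le_of_nonneg hc.le hs x y)
    _ = ENNReal.ofReal (c ^ d) * (ENNReal.ofReal (c ^ d)⁻¹ * decayIntegral (μ.prod ν) r) := by
        rw [lintegral_const_mul' _ _ ENNReal.ofReal_ne_top, lintegral_decay_comp_smul_sub _ hc]
    _ = decayIntegral (μ.prod ν) r := by
        rw [← mul_assoc, ← ENNReal.ofReal_mul (by positivity), mul_inv_cancel₀ (by positivity),
          ENNReal.ofReal_one, one_mul]

theorem lintegral_restrictionKernel_left_le (hc : 0 < c) (hr : 0 ≤ r) (y : E × F) :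
    ∫⁻ x, ENNReal.ofReal (restrictionKernel c r s x y) ∂μ.prod ν ≤
      ENNReal.ofReal (c ^ finrank ℝ F) * (decayIntegral μ r * decayIntegral ν s) := by
  set d := finrank ℝ (E × F) with hd
  calc ∫⁻ x, ENNReal.ofReal (restrictionKernel c r s x y) ∂μ.prod ν
      ≤ ∫⁻ x, ENNReal.ofReal (c ^ d) * (ENNReal.ofReal ((1 + ‖c • (x.1 - y.1)‖) ^ (-r)) *
          ENNReal.ofReal ((1 + ‖x.2‖) ^ (-s))) ∂μ.prod ν := by
        gcongr with x
        rw [← ENNReal.ofReal_mul (by positivity), ← ENNReal.ofReal_mul (by positivity)]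
        exact ENNReal.ofReal_le_ofReal (restrictionKernel_le_mul hc.le hr x y)
    _ = ENNReal.ofReal (c ^ d) * (ENNReal.ofReal (c ^ finrank ℝ E)⁻¹ * decayIntegral μ r *
          decayIntegral ν s) := by
        rw [lintegral_const_mul' _ _ ENNReal.ofReal_ne_top, lintegral_prod_mul
          (f := fun v ↦ ENNReal.ofReal ((1 + ‖c • (v - y.1)‖) ^ (-r)))
          (g := fun t ↦ ENNReal.ofReal ((1 + ‖t‖) ^ (-s))) (by fun_prop) (by fun_prop),
          lintegral_decay_comp_smul_sub μ hc, decayIntegral, decayIntegral]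
    _ = ENNReal.ofReal (c ^ finrank ℝ F) * (decayIntegral μ r * decayIntegral ν s) := by
        rw [mul_assoc, ← mul_assoc, ← ENNReal.ofReal_mul (by positivity), hd, finrank_prod,
          pow_add, mul_right_comm, mul_inv_cancel₀ (by positivity), one_mul]

variable {G H : Type*} [NormedAddCommGroup G] [NormedAddCommGroup H]

theorem eLpNorm_le_of_enorm_le_lintegral_restrictionKernel (hc : 0 < c) (hr : 0 ≤ r) (hs : 0 ≤ s)
    {A : ℝ} (hA : 0 ≤ A) {T : E × F → G} {u : E × F → H} (hu : AEStronglyMeasurable u (μ.prod ν))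
    (hT : ∀ᵐ x ∂μ.prod ν,
      ‖T x‖ₑ ≤ ∫⁻ y, ENNReal.ofReal (A * restrictionKernel c r s x y) * ‖u y‖ₑ ∂μ.prod ν)
    {p : ℝ≥0∞} (hp : 1 ≤ p) :
    eLpNorm T p (μ.prod ν) ≤
      (ENNReal.ofReal A * decayIntegral (μ.prod ν) r) ^ (1 - p.toReal⁻¹) *
        (ENNReal.ofReal A * (ENNReal.ofReal (c ^ finrank ℝ F) *
          (decayIntegral μ r * decayIntegral ν s))) ^ p.toReal⁻¹ * eLpNorm u p (μ.prod ν) := by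
  refine eLpNorm_le_of_enorm_le_lintegral_mul
    (k := fun x y ↦ ENNReal.ofReal (A * restrictionKernel c r s x y))
    (measurable_restrictionKernel.const_mul A).ennreal_ofReal.aemeasurable
    (.of_forall fun x ↦ ?_) (.of_forall fun y ↦ ?_) hu hT hp
  all_goals
    simp only [ENNReal.ofReal_mul hA]
    rw [lintegral_const_mul' _ _ ENNReal.ofReal_ne_top]
    gcongr
  · exact lintegral_restrictionKernel_right_le μ ν hc hs x
  · exact lintegral_restrictionKernel_left_le μ ν hc hr y

theorem exists_eLpNorm_le_of_enorm_le_lintegral_restrictionKernel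
    (hr : finrank ℝ (E × F) < r) (hs : finrank ℝ F < s) {A : ℝ} (hA : 0 ≤ A) {p : ℝ≥0∞}
    (hp : 1 ≤ p) :
    ∃ C > 0, ∀ c > 0, ∀ (T : E × F → G) (u : E × F → H), AEStronglyMeasurable u (μ.prod ν) →
      (∀ᵐ x ∂μ.prod ν,
        ‖T x‖ₑ ≤ ∫⁻ y, ENNReal.ofReal (A * restrictionKernel c r s x y) * ‖u y‖ₑ ∂μ.prod ν) →
      eLpNorm T p (μ.prod ν) ≤
        ENNReal.ofReal (C * (c ^ finrank ℝ F) ^ p.toReal⁻¹) * eLpNorm u p (μ.prod ν) := by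
  have hr0 : 0 ≤ r := (Nat.cast_nonneg _).trans hr.le
  have hs0 : 0 ≤ s := (Nat.cast_nonneg _).trans hs.le
  have hrE : finrank ℝ E < r := lt_of_le_of_lt (by simp) hr
  set J := decayIntegral (μ.prod ν) r
  set J' := decayIntegral μ r * decayIntegral ν s
  have hJ : J ≠ ∞ := decayIntegral_ne_top _ hr
  have hJ' : J' ≠ ∞ := ENNReal.mul_ne_top (decayIntegral_ne_top μ hrE) (decayIntegral_ne_top ν hs)
  set t := p.toReal⁻¹
  have ht0 : 0 ≤ t := by positivity
  have ht1 : 0 ≤ 1 - t := by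
    simpa [t] using ENNReal.toReal_mono ENNReal.one_ne_top (ENNReal.inv_le_one.mpr hp)
  set B := (ENNReal.ofReal A * J) ^ (1 - t) * (ENNReal.ofReal A * J') ^ t
  have hB : B ≠ ∞ := by finiteness
  refine ⟨B.toReal + 1, by positivity, fun c hc T u hu hT ↦ ?_⟩
  grw [eLpNorm_le_of_enorm_le_lintegral_restrictionKernel μ ν hc hr0 hs0 hA hu hT hp]
  gcongr
  calc (ENNReal.ofReal A * J) ^ (1 - t) *
        (ENNReal.ofReal A * (ENNReal.ofReal (c ^ finrank ℝ F) * J')) ^ t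
      = B * ENNReal.ofReal ((c ^ finrank ℝ F) ^ t) := by
        rw [mul_left_comm, ENNReal.mul_rpow_of_nonneg _ _ ht0,
          ENNReal.ofReal_rpow_of_nonneg (by positivity) ht0]
        ring
    _ ≤ ENNReal.ofReal ((B.toReal + 1) * (c ^ finrank ℝ F) ^ t) := by
        rw [ENNReal.ofReal_mul (by positivity)]
        gcongr
        rw [ENNReal.le_ofReal_iff_toReal_le hB (by positivity)]
        linarith

end RestrictionKernel

section Quantization

variable {m : ℕ}

instance isAddHaarMeasure_volume_V : (volume : Measure (V m)).IsAddHaarMeasure :=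
  Measure.prod.instIsAddHaarMeasure _ _

theorem exp_phase_eq_fourierChar_prodInner (h : ℝ) (x y ξ : V m) :
    Complex.exp (Complex.I * Complex.ofReal ((⟪x.1, ξ.1⟫ - (⟪y.1, ξ.1⟫ + y.2 * ξ.2)) / h)) =
      𝐞 (-prodInner _ _ ξ ((2 * Real.pi * h)⁻¹ • (y - (x.1, 0)))) := by
  rw [Real.fourierChar_apply, mul_comm Complex.I, map_smul, prodInner_apply]
  congr 3
  simp only [Prod.fst_sub, Prod.snd_sub, inner_sub_right, sub_zero, smul_eq_mul,
    real_inner_comm ξ.1, Real.inner_apply]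
  field_simp
  ring

theorem OpL_eq_integral_partialFourier (a : 𝓢(V m × V m, ℂ)) (h : ℝ) {u : V m → ℂ}
    (hu : Integrable u) (x : V m) :
    OpL m h a u x = (2 * Real.pi * h)⁻¹ ^ (m + 1) •
      ∫ y, partialFourier volume (prodInner _ _) a x ((2 * Real.pi * h)⁻¹ • (y - (x.1, 0))) *
        u y := by
  set e : V m × V m → ℂ := fun p ↦
    𝐞 (-prodInner _ _ p.2 ((2 * Real.pi * h)⁻¹ • (p.1 - (x.1, 0)))) with he
  have integrand_integrable :
      Integrable (fun p ↦ e p * a (x, p.2) * u p.1) (volume.prod volume) :=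
    ((hu.mul_prod (integrable_schwartz_slice volume a x)).bdd_mul (c := 1) (f := e)
      (Continuous.aestronglyMeasurable (by fun_prop))
      (.of_forall fun p ↦ (Circle.norm_coe _).le)).congr (.of_forall fun p ↦ by ring)
  simp only [OpL, exp_phase_eq_fourierChar_prodInner]
  rw [← inv_pow, Measure.volume_eq_prod (V m) (V m), integral_prod _ integrand_integrable]
  simp only [he, integral_mul_const, partialFourier, VectorFourier.fourierIntegral,
    Circle.smul_def, smul_eq_mul]
  rfl

theorem exists_enorm_OpL_le_lintegral_restrictionKernel (a : 𝓢(V m × V m, ℂ)) (k N : ℕ) :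
    ∃ A ≥ 0, ∀ h > 0, ∀ u : V m → ℂ, Integrable u → ∀ x, ‖OpL m h a u x‖ₑ ≤
      ∫⁻ y, ENNReal.ofReal (A * restrictionKernel (2 * Real.pi * h)⁻¹ N k x y) * ‖u y‖ₑ := by
  obtain ⟨A, hA, hAa⟩ :=
    exists_norm_partialFourier_le_of_isCoercive volume isCoercive_prodInner a k N
  refine ⟨A, hA, fun h hh u hu x ↦ ?_⟩
  rw [OpL_eq_integral_partialFourier a h hu]
  set c := (2 * Real.pi * h)⁻¹
  have kernel_le (y : V m) :
      c ^ (m + 1) * ‖partialFourier volume (prodInner _ _) a x (c • (y - (x.1, 0)))‖ ≤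
        A * restrictionKernel c N k x y := by
    have snd_decay : (1 + ‖x‖) ^ (-k : ℝ) ≤ (1 + ‖x.2‖) ^ (-k : ℝ) :=
      Real.rpow_le_rpow_of_nonpos (by positivity) (by gcongr; exact norm_snd_le x) (by simp)
    grw [hAa, snd_decay, restrictionKernel]
    simp only [finrank_prod, finrank_euclideanSpace_fin, finrank_self]
    exact le_of_eq (by ring)
  grw [enorm_smul, enorm_integral_le_lintegral_enorm, ← lintegral_const_mul' _ _ enorm_ne_top]
  refine lintegral_mono fun y ↦ ?_
  rw [enorm_mul, ← mul_assoc, Real.enorm_of_nonneg (by positivity), ← ofReal_norm,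
    ← ENNReal.ofReal_mul (by positivity)]
  gcongr ENNReal.ofReal ?_ * _
  exact kernel_le y

end Quantization

theorem stmt_2_general (m : ℕ) (a : SchwartzMap (V m × V m) ℂ) {p : ℝ≥0∞} (hp : 1 ≤ p) :
    ∃ C > 0, ∀ h : ℝ, 0 < h → ∀ u : V m → ℂ, Integrable u →
      eLpNorm (OpL m h ⇑a u) p volume ≤
        ENNReal.ofReal (C * h ^ (-p.toReal⁻¹)) * eLpNorm u p volume := by
  obtain ⟨A, hA, kernel_bound⟩ := exists_enorm_OpL_le_lintegral_restrictionKernel a 2 (m + 2)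
  obtain ⟨C, hC, norm_bound⟩ :=
    exists_eLpNorm_le_of_enorm_le_lintegral_restrictionKernel (G := ℂ) (H := ℂ)
      (volume : Measure (EuclideanSpace ℝ (Fin m))) (volume : Measure ℝ)
      (r := (m + 2 : ℕ)) (s := (2 : ℕ)) (by simp) (by simp) hA hp
  refine ⟨C, hC, fun h hh u hu ↦ ?_⟩
  have scale_le : (2 * Real.pi * h)⁻¹ ≤ h⁻¹ :=
    inv_anti₀ hh (le_mul_of_one_le_left hh.le (by linarith [Real.pi_gt_three]))
  refine (norm_bound _ (by positivity) _ u hu.aestronglyMeasurable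
    (.of_forall (kernel_bound h hh u hu))).trans ?_
  rw [finrank_self, pow_one, Real.rpow_neg hh.le, ← Real.inv_rpow hh.le]
  gcongr ENNReal.ofReal (C * ?_ ^ _) * _

/-- for every Schwartz symbol `a` there is `C > 0` such that for all `h ∈ (0,1]`
and all Schwartz `u`, `‖Op_h^Λ(a)u‖_{L²} ≤ C h^{-1/2} ‖u‖_{L²}`. -/
theorem stmt_2 (m : ℕ) (a : SchwartzMap (V m × V m) ℂ) :
    ∃ C > 0, ∀ h : ℝ, 0 < h → h ≤ 1 → ∀ u : SchwartzMap (V m) ℂ,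
      eLpNorm (OpL m h ⇑a ⇑u) 2 volume ≤
        ENNReal.ofReal (C * h ^ (-(1/2 : ℝ))) * eLpNorm (⇑u) 2 volume := by
  obtain ⟨C, hC, bound⟩ := stmt_2_general m a one_le_two
  exact ⟨C, hC, fun h hh _ u ↦ by simpa using bound h hh u u.integrable⟩
end

section
/- For every f ∈ 𝒮(ℝⁿ), ‖Ξ₀ f‖_{L²(ℝⁿ)} ≤ 2 ‖∂_{x_n} f‖_{L²(ℝⁿ)}. In particular, Ξ₀ extends to a bounded operator from the Sobolev space H¹(ℝⁿ) to L²(ℝⁿ). -/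
open MeasureTheory

/-!
`Ξ₀f(x', ·)` averages the dilates `s ↦ g(x', t s)`, `0 < t ≤ 1`, of `g = ∂ₙf`. By Minkowski's
integral inequality its `Lᵖ` norm is at most the average of the norms of these dilates, and a
dilation by `t` in one variable multiplies the `Lᵖ` norm by `t^(-1/p)`. Hence the constant
`∫₀¹ t^(-1/p) dt = (1 - 1/p)⁻¹`, which is `2` for `p = 2`.

Minkowski's inequality itself comes from Hölder's inequality in `t`, with weight `w(t)` the
`Lᵖ` norm of the slice at `t`, followed by Tonelli's theorem.
-/

open scoped ENNReal

section Minkowski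

variable {α β E : Type*} [MeasurableSpace α] [MeasurableSpace β] {μ : Measure α} {ν : Measure β}
  [NormedAddCommGroup E]

theorem rpow_lintegral_le_rpow_lintegral_mul_lintegral {r : ℝ} (hr : 1 ≤ r) {v w : β → ℝ≥0∞}
    (hv : AEMeasurable v ν) (hw : AEMeasurable w ν) (hw_top : ∀ᵐ t ∂ν, w t ≠ ∞)
    (hvw : ∀ᵐ t ∂ν, w t = 0 → v t = 0) :
    (∫⁻ t, v t ∂ν) ^ r ≤
      (∫⁻ t, w t ∂ν) ^ (r - 1) * ∫⁻ t, w t ^ (1 - r) * v t ^ r ∂ν := by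
  have hr0 : 0 < r := by linarith
  have hr_inv : r⁻¹ ≤ 1 := inv_le_one_of_one_le₀ hr
  have factor : ∀ᵐ t ∂ν, v t = w t ^ (1 - r⁻¹) * (w t ^ (1 - r) * v t ^ r) ^ r⁻¹ := by
    filter_upwards [hw_top, hvw] with t htop hzero
    by_cases h0 : w t = 0
    · simp [hzero h0, hr0]
    · rw [ENNReal.mul_rpow_of_nonneg _ _ (by positivity), ENNReal.rpow_rpow_inv hr0.ne',
        ← ENNReal.rpow_mul, ← mul_assoc, ← ENNReal.rpow_add _ _ h0 htop]
      have hexp : 1 - r⁻¹ + (1 - r) * r⁻¹ = 0 := by field_simp; ring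
      rw [hexp, ENNReal.rpow_zero, one_mul]
  have holder : ∫⁻ t, v t ∂ν ≤
      (∫⁻ t, w t ∂ν) ^ (1 - r⁻¹) * (∫⁻ t, w t ^ (1 - r) * v t ^ r ∂ν) ^ r⁻¹ := by
    rw [lintegral_congr_ae factor]
    exact ENNReal.lintegral_mul_norm_pow_le (by fun_prop) (by fun_prop) (by linarith)
      (by positivity) (by ring)
  calc (∫⁻ t, v t ∂ν) ^ r
      ≤ ((∫⁻ t, w t ∂ν) ^ (1 - r⁻¹) * (∫⁻ t, w t ^ (1 - r) * v t ^ r ∂ν) ^ r⁻¹) ^ r := by gcongr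
    _ = (∫⁻ t, w t ∂ν) ^ (r - 1) * ∫⁻ t, w t ^ (1 - r) * v t ^ r ∂ν := by
      rw [ENNReal.mul_rpow_of_nonneg _ _ hr0.le, ENNReal.rpow_inv_rpow hr0.ne',
        ← ENNReal.rpow_mul, sub_mul, inv_mul_cancel₀ hr0.ne', one_mul]

theorem rpow_one_sub_mul_rpow_le {r : ℝ} (hr : 1 ≤ r) {a : ℝ≥0∞} (ha : a ≠ ∞) :
    a ^ (1 - r) * a ^ r ≤ a := by
  by_cases h0 : a = 0
  · simp [h0, zero_lt_one.trans_le hr]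
  · rw [← ENNReal.rpow_add _ _ h0 ha, sub_add_cancel, ENNReal.rpow_one]

variable [SFinite μ] [SFinite ν]

theorem lintegral_rpow_lintegral_le_rpow_lintegral {r : ℝ} (hr : 1 ≤ r) {G : α × β → ℝ≥0∞}
    (hG : Measurable G) {w : β → ℝ≥0∞} (hw : Measurable w)
    (hGw : ∀ᵐ t ∂ν, ∫⁻ x, G (x, t) ^ r ∂μ ≤ w t ^ r) :
    ∫⁻ x, (∫⁻ t, G (x, t) ∂ν) ^ r ∂μ ≤ (∫⁻ t, w t ∂ν) ^ r := by
  have hr0 : 0 < r := by linarith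
  by_cases hw_int : ∫⁻ t, w t ∂ν = ∞
  · simp [hw_int, hr0]
  have hw_top : ∀ᵐ t ∂ν, w t ≠ ∞ := (ae_lt_top hw hw_int).mono fun t ht => ht.ne
  have hGw_zero : ∀ᵐ x ∂μ, ∀ᵐ t ∂ν, w t = 0 → G (x, t) = 0 := by
    rw [Measure.ae_ae_comm (by measurability)]
    filter_upwards [hGw] with t ht
    by_cases h0 : w t = 0
    · rw [h0, ENNReal.zero_rpow_of_pos hr0, nonpos_iff_eq_zero,
        lintegral_eq_zero_iff (by fun_prop)] at ht
      filter_upwards [ht] with x hx _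
      simpa [hr0, hr0.not_gt] using hx
    · simp [h0]
  set W := ∫⁻ t, w t ∂ν
  have hW : W ^ (r - 1) ≠ ∞ := ENNReal.rpow_ne_top_of_nonneg (by linarith) hw_int
  calc ∫⁻ x, (∫⁻ t, G (x, t) ∂ν) ^ r ∂μ
      ≤ ∫⁻ x, W ^ (r - 1) * ∫⁻ t, w t ^ (1 - r) * G (x, t) ^ r ∂ν ∂μ := by
        refine lintegral_mono_ae (hGw_zero.mono fun x hx => ?_)
        exact rpow_lintegral_le_rpow_lintegral_mul_lintegral hr (by fun_prop) hw.aemeasurable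
          hw_top hx
    _ = W ^ (r - 1) * ∫⁻ t, w t ^ (1 - r) * ∫⁻ x, G (x, t) ^ r ∂μ ∂ν := by
        rw [lintegral_const_mul' _ _ hW,
          lintegral_lintegral_swap (Measurable.aemeasurable (by fun_prop))]
        simp_rw [fun t => lintegral_const_mul (μ := μ) (w t ^ (1 - r))
          (f := fun x => G (x, t) ^ r) (by fun_prop)]
    _ ≤ W ^ (r - 1) * W := by
        refine mul_le_mul_right (lintegral_mono_ae ?_) _
        filter_upwards [hGw, hw_top] with t ht ht_top
        exact (mul_le_mul_right ht _).trans (rpow_one_sub_mul_rpow_le hr ht_top)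
    _ = W ^ r := by
        simpa using (ENNReal.rpow_add_of_nonneg (x := W) (r - 1) 1 (by linarith) zero_le_one).symm

-- A measurable majorant `w` stands in for `t ↦ eLpNorm (fun x => G (x, t)) p μ`, whose
-- measurability is unclear when `p = ∞`.
theorem eLpNorm_lintegral_le_lintegral {p : ℝ≥0∞} (hp : 1 ≤ p) {G : α × β → ℝ≥0∞}
    (hG : Measurable G) {w : β → ℝ≥0∞} (hw : Measurable w)
    (hGw : ∀ᵐ t ∂ν, eLpNorm (fun x => G (x, t)) p μ ≤ w t) :
    eLpNorm (fun x => ∫⁻ t, G (x, t) ∂ν) p μ ≤ ∫⁻ t, w t ∂ν := by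
  rcases eq_or_ne p ∞ with rfl | hp_top
  · have hG_le : ∀ᵐ x ∂μ, ∀ᵐ t ∂ν, G (x, t) ≤ w t := by
      rw [Measure.ae_ae_comm (p := fun x t => G (x, t) ≤ w t)
        (measurableSet_le hG (hw.comp measurable_snd))]
      filter_upwards [hGw] with t ht
      exact (enorm_ae_le_eLpNormEssSup (fun x => G (x, t)) μ).mono fun x hx => hx.trans ht
    exact eLpNormEssSup_le_of_ae_enorm_bound (hG_le.mono fun x hx => lintegral_mono_ae hx)
  have hp0 : p ≠ 0 := (zero_lt_one.trans_le hp).ne'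
  have hr : 1 ≤ p.toReal := by simpa using ENNReal.toReal_mono hp_top hp
  have hr0 : 0 < p.toReal := by linarith
  simp only [eLpNorm_eq_lintegral_rpow_enorm_toReal hp0 hp_top, enorm_eq_self, one_div,
    ENNReal.rpow_inv_le_iff hr0] at hGw ⊢
  exact lintegral_rpow_lintegral_le_rpow_lintegral hr hG hw hGw

theorem eLpNorm_integral_le_lintegral [NormedSpace ℝ E] {p : ℝ≥0∞} (hp : 1 ≤ p) {F : α × β → E}
    (hF : AEStronglyMeasurable F (μ.prod ν)) {w : β → ℝ≥0∞} (hw : Measurable w)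
    (hFw : ∀ᵐ t ∂ν, eLpNorm (fun x => F (x, t)) p μ ≤ w t) :
    eLpNorm (fun x => ∫ t, F (x, t) ∂ν) p μ ≤ ∫⁻ t, w t ∂ν := by
  obtain ⟨G, hG, hFG⟩ := hF.enorm
  have hFG_left : ∀ᵐ x ∂μ, ∀ᵐ t ∂ν, ‖F (x, t)‖ₑ = G (x, t) := Measure.ae_ae_of_ae_prod hFG
  have hFG_right : ∀ᵐ t ∂ν, ∀ᵐ x ∂μ, ‖F (x, t)‖ₑ = G (x, t) :=
    Measure.ae_ae_of_ae_prod (Measure.measurePreserving_swap.quasiMeasurePreserving.ae hFG)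
  calc eLpNorm (fun x => ∫ t, F (x, t) ∂ν) p μ
      ≤ eLpNorm (fun x => ∫⁻ t, G (x, t) ∂ν) p μ := by
        refine eLpNorm_mono_enorm_ae (hFG_left.mono fun x hx => ?_)
        exact (enorm_integral_le_lintegral_enorm _).trans_eq (lintegral_congr_ae hx)
    _ ≤ ∫⁻ t, w t ∂ν := by
        refine eLpNorm_lintegral_le_lintegral hp hG hw ?_
        filter_upwards [hFw, hFG_right] with t ht hFGt
        exact (eLpNorm_congr_enorm_ae (hFGt.mono fun x hx => hx.symm)).trans_le ht

end Minkowski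

section Dilation

variable {X E : Type*} [MeasurableSpace X] {μ : Measure X} [SFinite μ] [NormedAddCommGroup E]

theorem map_prod_volume_mul_left {t : ℝ} (ht : t ≠ 0) :
    (μ.prod volume).map (Prod.map id (t * ·)) = ENNReal.ofReal |t⁻¹| • μ.prod volume := by
  rw [← Measure.map_prod_map _ _ measurable_id (measurable_const_mul t), Measure.map_id,
    Real.map_volume_mul_left ht, Measure.prod_smul_right]

theorem eLpNorm_comp_mul_left_snd {t : ℝ} (ht : t ≠ 0) (g : X × ℝ → E) (p : ℝ≥0∞) :
    eLpNorm (fun x => g (x.1, t * x.2)) p (μ.prod volume) =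
      ENNReal.ofReal |t⁻¹| ^ p⁻¹.toReal * eLpNorm g p (μ.prod volume) := by
  have hemb : MeasurableEmbedding (Prod.map id (t * ·) : X × ℝ → X × ℝ) :=
    MeasurableEmbedding.id.prodMap (measurableEmbedding_mulLeft₀ ht)
  have hc : ENNReal.ofReal |t⁻¹| ≠ 0 := by simpa using ht
  have hmap := hemb.eLpNorm_map_measure (g := g) (p := p) (μ := μ.prod volume)
  rw [map_prod_volume_mul_left ht, eLpNorm_smul_measure_of_ne_zero hc, one_div] at hmap
  exact hmap.symm

theorem quasiMeasurePreserving_mul_left_snd {ν : Measure ℝ} [SFinite ν] (hν : ∀ᵐ t ∂ν, t ≠ 0) :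
    Measure.QuasiMeasurePreserving (fun y : (X × ℝ) × ℝ => (y.1.1, y.2 * y.1.2))
      ((μ.prod volume).prod ν) (μ.prod volume) := by
  refine QuasiMeasurePreserving.prod_of_left (by fun_prop) (hν.mono fun t ht => ⟨by fun_prop, ?_⟩)
  exact (map_prod_volume_mul_left ht).le.absolutelyContinuous.trans
    Measure.smul_absolutelyContinuous

theorem lintegral_Ioc_zero_one_ofReal_rpow {a : ℝ} (ha : -1 < a) :
    ∫⁻ t in Set.Ioc (0 : ℝ) 1, ENNReal.ofReal (t ^ a) = ENNReal.ofReal (a + 1)⁻¹ := by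
  have hint : IntegrableOn (fun t : ℝ => t ^ a) (Set.Ioc 0 1) :=
    (intervalIntegrable_iff_integrableOn_Ioc_of_le zero_le_one).1
      (intervalIntegral.intervalIntegrable_rpow' ha)
  have hnonneg : 0 ≤ᵐ[volume.restrict (Set.Ioc 0 1)] fun t : ℝ => t ^ a :=
    (ae_restrict_mem measurableSet_Ioc).mono fun t ht => Real.rpow_nonneg ht.1.le a
  rw [← ofReal_integral_eq_lintegral_ofReal hint hnonneg,
    ← intervalIntegral.integral_of_le zero_le_one, integral_rpow (Or.inl ha), Real.one_rpow,
    Real.zero_rpow (by linarith), sub_zero, one_div]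

theorem lintegral_Ioc_ofReal_abs_inv_rpow {p : ℝ≥0∞} (hp : 1 < p) :
    ∫⁻ t in Set.Ioc (0 : ℝ) 1, ENNReal.ofReal |t⁻¹| ^ p⁻¹.toReal = (1 - p⁻¹)⁻¹ := by
  have hp_inv : p⁻¹ ≠ ∞ := (ENNReal.inv_lt_one.2 hp).ne_top
  have ha : p⁻¹.toReal < 1 := by
    simpa using ENNReal.toReal_strict_mono ENNReal.one_ne_top (ENNReal.inv_lt_one.2 hp)
  calc ∫⁻ t in Set.Ioc (0 : ℝ) 1, ENNReal.ofReal |t⁻¹| ^ p⁻¹.toReal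
      = ∫⁻ t in Set.Ioc (0 : ℝ) 1, ENNReal.ofReal (t ^ (-p⁻¹.toReal)) := by
        refine setLIntegral_congr_fun measurableSet_Ioc fun t ht => ?_
        have ht0 : 0 < t := ht.1
        rw [abs_of_pos (inv_pos.2 ht0), ENNReal.ofReal_rpow_of_pos (inv_pos.2 ht0),
          Real.inv_rpow ht0.le, Real.rpow_neg ht0.le]
    _ = ENNReal.ofReal (1 - p⁻¹.toReal)⁻¹ := by
        rw [lintegral_Ioc_zero_one_ofReal_rpow (by linarith), neg_add_eq_sub]
    _ = (1 - p⁻¹)⁻¹ := by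
        rw [ENNReal.ofReal_inv_of_pos (by linarith), ENNReal.ofReal_sub _ ENNReal.toReal_nonneg,
          ENNReal.ofReal_one, ENNReal.ofReal_toReal hp_inv]

end Dilation

theorem stmt_3_general {X E : Type*} [MeasurableSpace X] {μ : Measure X} [SFinite μ]
    [NormedAddCommGroup E] [NormedSpace ℝ E] [CompleteSpace E] {p : ℝ≥0∞} (hp : 1 < p)
    {g : X × ℝ → E} (hg : AEStronglyMeasurable g (μ.prod volume)) :
    eLpNorm (fun x => ∫ t in (0 : ℝ)..1, g (x.1, t * x.2)) p (μ.prod volume) ≤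
      (1 - p⁻¹)⁻¹ * eLpNorm g p (μ.prod volume) := by
  have h_ne : ∀ᵐ t ∂volume.restrict (Set.Ioc (0 : ℝ) 1), t ≠ 0 :=
    (ae_restrict_mem measurableSet_Ioc).mono fun t ht => ht.1.ne'
  have hF := hg.comp_quasiMeasurePreserving (quasiMeasurePreserving_mul_left_snd h_ne)
  simp only [intervalIntegral.integral_of_le zero_le_one]
  refine (eLpNorm_integral_le_lintegral hp.le hF (by fun_prop)
    (h_ne.mono fun t ht => (eLpNorm_comp_mul_left_snd ht g p).le)).trans_eq ?_
  rw [lintegral_mul_const _ (by fun_prop), lintegral_Ioc_ofReal_abs_inv_rpow hp]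

/-- with `Ξ₀f(x', xₙ) = ∫₀¹ (∂_{xₙ}f)(x', t xₙ) dt`, for every Schwartz `f`
one has `‖Ξ₀ f‖_{L²(ℝⁿ)} ≤ 2 ‖∂_{xₙ} f‖_{L²(ℝⁿ)}`.  Points of `ℝⁿ` (`n = m+1 ≥ 1`) are
written `(x', xₙ) ∈ ℝ^{n-1} × ℝ`. -/
theorem stmt_3 (m : ℕ) (f : SchwartzMap (EuclideanSpace ℝ (Fin m) × ℝ) ℂ) :
    eLpNorm (fun x : EuclideanSpace ℝ (Fin m) × ℝ =>
        ∫ t in (0:ℝ)..1, deriv (fun s : ℝ => f (x.1, s)) (t * x.2)) 2 volume ≤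
      2 * eLpNorm (fun x : EuclideanSpace ℝ (Fin m) × ℝ =>
        deriv (fun s : ℝ => f (x.1, s)) x.2) 2 volume := by
  have hg := aestronglyMeasurable_deriv_with_param (f := fun a s => f (a, s)) f.continuous volume
  simpa only [Measure.volume_eq_prod, ENNReal.one_sub_inv_two, inv_inv] using
    stmt_3_general ENNReal.one_lt_two hg
end

section
/- Let a, b ∈ 𝒮(ℝ^{2n}) and define c ∈ 𝒮(ℝ^{2n}) by c(x,ξ) = a(x, ξ', 0) · b(x', 0, ξ). Then there exists C > 0 such that for all h ∈ (0,1] and all u ∈ 𝒮(ℝⁿ), ‖(Op_h^Λ(a) ∘ Op_h^Λ(b))u − Op_h^Λ(c)u‖_{L²(ℝⁿ)} ≤ C h^{1/2} ‖u‖_{L²(ℝⁿ)}. -/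
open MeasureTheory
open scoped RealInnerProductSpace

/-!
Substituting `y = x̂ + 2πh w` with `x̂ = (x', 0)` turns `Op_h^Λ(a)u(x)` into
`∫ K_a(x, w) u(x̂ + 2πh w) dw`, where `K_a(x, ·)` is the Fourier transform of `a(x, ·)` and does not
depend on `h`. Composing two such operators gives one of the same form, with kernel
`v ↦ ∫ K_a(x, w) K_b(x̂ + 2πh w, v - ŵ) dw`. Freezing `2πh w` at `0` changes the kernel by `O(h)`,
with rapid decay, and by Fourier inversion the frozen kernel is exactly that of `Op_h^Λ(c)`.

An operator with decaying kernel has `L²` norm `O(h^{-1/2})`, not `O(1)`: its input is evaluated at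
`(x' + 2πh w', 2πh w_n)`, so translation invariance takes care of the tangential variables, while
the normal variable has to be rescaled. The error is therefore `O(h · h^{-1/2})`.
-/

open Module SchwartzMap
open scoped ENNReal FourierTransform

noncomputable section

section DecayWeight

variable {E : Type*} [NormedAddCommGroup E]

/-- The weight `(1 + ‖x‖)^{-k}`, in which the decay of symbols and kernels is measured. -/
def decayWeight (k : ℕ) (x : E) : ℝ := ((1 + ‖x‖) ^ k)⁻¹

lemma decayWeight_pos (k : ℕ) (x : E) : 0 < decayWeight k x := by
  unfold decayWeight
  positivity

lemma decayWeight_le_one (k : ℕ) (x : E) : decayWeight k x ≤ 1 :=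
  inv_le_one_of_one_le₀ (one_le_pow₀ (by linarith [norm_nonneg x]))

lemma decayWeight_le_of_norm_le {E' : Type*} [NormedAddCommGroup E'] (k : ℕ) {x : E} {y : E'}
    (hxy : ‖x‖ ≤ ‖y‖) : decayWeight k y ≤ decayWeight k x :=
  inv_anti₀ (by positivity) (by gcongr)

lemma decayWeight_add (k l : ℕ) (x : E) :
    decayWeight (k + l) x = decayWeight k x * decayWeight l x := by
  simp only [decayWeight, pow_add, mul_inv]

lemma norm_mul_decayWeight_succ_le (k : ℕ) (x : E) :
    ‖x‖ * decayWeight (k + 1) x ≤ decayWeight k x := by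
  have h : ‖x‖ * decayWeight 1 x ≤ 1 := by
    rw [decayWeight, pow_one, ← div_eq_mul_inv, div_le_one (by positivity)]
    linarith
  calc ‖x‖ * decayWeight (k + 1) x = decayWeight k x * (‖x‖ * decayWeight 1 x) := by
        rw [decayWeight_add]; ring
    _ ≤ decayWeight k x := mul_le_of_le_one_right (decayWeight_pos k x).le h

lemma decayWeight_mul_decayWeight_sub_le (k : ℕ) {w p : E} (hp : ‖p‖ ≤ ‖w‖) (v : E) :
    decayWeight k w * decayWeight k (v - p) ≤ decayWeight k v := by
  have h : ‖v‖ ≤ ‖w‖ + ‖v - p‖ := by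
    calc ‖v‖ = ‖p + (v - p)‖ := by rw [add_sub_cancel]
      _ ≤ ‖w‖ + ‖v - p‖ := (norm_add_le _ _).trans (by gcongr)
  rw [decayWeight, decayWeight, decayWeight, ← mul_inv, ← mul_pow]
  refine inv_anti₀ (by positivity) (pow_le_pow_left₀ (by positivity) ?_ k)
  nlinarith [norm_nonneg w, norm_nonneg (v - p), mul_nonneg (norm_nonneg w) (norm_nonneg (v - p))]

@[fun_prop]
lemma continuous_decayWeight (k : ℕ) : Continuous (decayWeight k : E → ℝ) :=
  Continuous.inv₀ (by fun_prop) fun x => by positivity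

variable [NormedSpace ℝ E] [FiniteDimensional ℝ E] [MeasurableSpace E] [BorelSpace E]

lemma integrable_decayWeight (μ : Measure E) [μ.IsAddHaarMeasure] {k : ℕ}
    (hk : finrank ℝ E < k) : Integrable (decayWeight k : E → ℝ) μ := by
  refine (integrable_one_add_norm (μ := μ) (r := k) (by exact_mod_cast hk)).congr
    (.of_forall fun x => ?_)
  simp only [decayWeight]
  rw [Real.rpow_neg (by positivity), Real.rpow_natCast]

lemma integrable_of_norm_le_decayWeight {G : Type*} [NormedAddCommGroup G] {μ : Measure E}
    [μ.IsAddHaarMeasure] {k : ℕ} (hk : finrank ℝ E < k) {f : E → G}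
    (hf : AEStronglyMeasurable f μ) {A : ℝ} (hA : ∀ x, ‖f x‖ ≤ A * decayWeight k x) :
    Integrable f μ :=
  ((integrable_decayWeight μ hk).const_mul A).mono' hf (.of_forall hA)

lemma integral_decayWeight_pos (μ : Measure E) [μ.IsAddHaarMeasure] {k : ℕ}
    (hk : finrank ℝ E < k) : 0 < ∫ x : E, decayWeight k x ∂μ := by
  rw [integral_pos_iff_support_of_nonneg (fun x => (decayWeight_pos k x).le)
    (integrable_decayWeight μ hk), Function.support_eq_univ fun x => (decayWeight_pos k x).ne']
  exact Measure.measure_univ_pos.2 (NeZero.ne μ)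

lemma lintegral_decayWeight (μ : Measure E) [μ.IsAddHaarMeasure] {k : ℕ}
    (hk : finrank ℝ E < k) : ∫⁻ x : E, ENNReal.ofReal (decayWeight k x) ∂μ =
      ENNReal.ofReal (∫ x : E, decayWeight k x ∂μ) :=
  (ofReal_integral_eq_lintegral_ofReal (integrable_decayWeight μ hk)
    (.of_forall fun x => (decayWeight_pos k x).le)).symm

end DecayWeight

section PartialFourier

variable {X F G : Type*} [NormedAddCommGroup X] [NormedSpace ℝ X]
  [NormedAddCommGroup F] [InnerProductSpace ℝ F] [NormedAddCommGroup G] [NormedSpace ℂ G]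

lemma norm_iteratedFDeriv_slice_le {g : X × F → G} (q : ℕ) (hg : ContDiff ℝ q g) (x : X) (ξ : F) :
    ‖iteratedFDeriv ℝ q (fun ζ => g (x, ζ)) ξ‖ ≤ ‖iteratedFDeriv ℝ q g (x, ξ)‖ := by
  have hslice : (fun ζ => g (x, ζ)) =
      (fun z => g ((x, 0) + z)) ∘ ContinuousLinearMap.inr ℝ X F := by
    ext ζ
    simp
  have hshift : ContDiff ℝ q fun z => g ((x, 0) + z) := hg.comp (by fun_prop)
  rw [hslice, ContinuousLinearMap.iteratedFDeriv_comp_right _ hshift ξ le_rfl,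
    iteratedFDeriv_comp_add_left]
  simp only [ContinuousLinearMap.inr_apply, Prod.mk_add_mk, add_zero, zero_add]
  exact (ContinuousMultilinearMap.norm_compContinuousLinearMap_le _ _).trans <|
    mul_le_of_le_one_right (norm_nonneg _) <| Finset.prod_le_one (fun _ _ => norm_nonneg _)
      fun _ _ => ContinuousLinearMap.norm_inr_le_one ℝ X F

lemma exists_norm_iteratedFDeriv_le (a : 𝓢(X × F, G)) (k l N : ℕ) :
    ∃ C > 0, ∀ q ≤ N, ∀ x ξ,
      ‖iteratedFDeriv ℝ q a (x, ξ)‖ ≤ C * decayWeight k x * decayWeight l ξ := by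
  set C := 2 ^ (k + l) * (Finset.Iic (k + l, N)).sup
    (fun p => SchwartzMap.seminorm ℝ p.1 p.2) a
  have : 0 ≤ C := by positivity
  refine ⟨C + 1, by positivity, fun q hq x ξ => ?_⟩
  have hweights : (1 + ‖x‖) ^ k * (1 + ‖ξ‖) ^ l ≤ (1 + ‖(x, ξ)‖) ^ (k + l) := by
    rw [pow_add]
    gcongr
    exacts [norm_fst_le (x, ξ), norm_snd_le (x, ξ)]
  rw [decayWeight, decayWeight, mul_assoc, ← mul_inv, ← div_eq_mul_inv, le_div_iff₀ (by positivity),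
    mul_comm]
  calc (1 + ‖x‖) ^ k * (1 + ‖ξ‖) ^ l * ‖iteratedFDeriv ℝ q a (x, ξ)‖
      ≤ (1 + ‖(x, ξ)‖) ^ (k + l) * ‖iteratedFDeriv ℝ q a (x, ξ)‖ := by gcongr
    _ ≤ C := SchwartzMap.one_add_le_sup_seminorm_apply (m := (k + l, N)) le_rfl hq a (x, ξ)
    _ ≤ C + 1 := by linarith

lemma exists_norm_iteratedFDeriv_sub_le (a : 𝓢(X × F, G)) (l N : ℕ) :
    ∃ C > 0, ∀ q ≤ N, ∀ x y ξ,
      ‖iteratedFDeriv ℝ q (fun ζ => a (x, ζ) - a (y, ζ)) ξ‖ ≤ C * ‖x - y‖ * decayWeight l ξ := by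
  obtain ⟨C, hC, ha⟩ := exists_norm_iteratedFDeriv_le a 0 l (N + 1)
  refine ⟨C, hC, fun q hq x y ξ => ?_⟩
  have hdiff : Differentiable ℝ (iteratedFDeriv ℝ q a) :=
    (a.smooth (q + 1)).differentiable_iteratedFDeriv (by exact_mod_cast Nat.lt_succ_self q)
  have hderiv (z : X) : HasFDerivAt (fun z => iteratedFDeriv ℝ q a (z, ξ))
      ((fderiv ℝ (iteratedFDeriv ℝ q a) (z, ξ)).comp (.inl ℝ X F)) z :=
    (hdiff (z, ξ)).hasFDerivAt.comp z (hasFDerivAt_prodMk_left z ξ)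
  have hbound (z : X) :
      ‖(fderiv ℝ (iteratedFDeriv ℝ q a) (z, ξ)).comp (.inl ℝ X F)‖ ≤ C * decayWeight l ξ := by
    calc _ ≤ ‖fderiv ℝ (iteratedFDeriv ℝ q a) (z, ξ)‖ * ‖ContinuousLinearMap.inl ℝ X F‖ :=
          ContinuousLinearMap.opNorm_comp_le _ _
      _ ≤ ‖fderiv ℝ (iteratedFDeriv ℝ q a) (z, ξ)‖ :=
          mul_le_of_le_one_right (by positivity) (ContinuousLinearMap.norm_inl_le_one ℝ X F)
      _ = ‖iteratedFDeriv ℝ (q + 1) a (z, ξ)‖ := norm_fderiv_iteratedFDeriv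
      _ ≤ C * decayWeight l ξ := by simpa [decayWeight] using ha (q + 1) (by omega) z ξ
  -- The difference of two slices is a slice of `a` minus a translate of `a`.
  set d : X × F → G := fun p => a p - a (p + (y - x, 0)) with hd
  have hshift : ContDiff ℝ q fun p : X × F => a (p + (y - x, 0)) := (a.smooth q).comp (by fun_prop)
  calc ‖iteratedFDeriv ℝ q (fun ζ => a (x, ζ) - a (y, ζ)) ξ‖
      = ‖iteratedFDeriv ℝ q (fun ζ => d (x, ζ)) ξ‖ := by simp [hd]
    _ ≤ ‖iteratedFDeriv ℝ q d (x, ξ)‖ :=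
        norm_iteratedFDeriv_slice_le q ((a.smooth q).sub hshift) x ξ
    _ = ‖iteratedFDeriv ℝ q a (x, ξ) - iteratedFDeriv ℝ q a (y, ξ)‖ := by
        rw [hd, fun_iteratedFDeriv_sub_apply (a.smooth q).contDiffAt hshift.contDiffAt,
          iteratedFDeriv_comp_add_right]
        simp
    _ ≤ C * decayWeight l ξ * ‖x - y‖ :=
        convex_univ.norm_image_sub_le_of_norm_hasFDerivWithin_le
          (fun z _ => (hderiv z).hasFDerivWithinAt) (fun z _ => hbound z) trivial trivial
    _ = C * ‖x - y‖ * decayWeight l ξ := by ring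

variable [FiniteDimensional ℝ F] [MeasurableSpace F] [BorelSpace F]

lemma pow_mul_norm_fourier_le {f : F → G} {N n : ℕ} {B : ℝ} (hf : ContDiff ℝ N f)
    (hint : ∀ q ≤ N, Integrable fun ξ => ‖iteratedFDeriv ℝ q f ξ‖)
    (hB : ∀ q ≤ N, ∫ ξ, ‖iteratedFDeriv ℝ q f ξ‖ ≤ B) (hn : n ≤ N) (w : F) :
    ‖w‖ ^ n * ‖𝓕 f w‖ ≤ 2 ^ n * ((n + 1) * B) := by
  have h := Real.pow_mul_norm_iteratedFDeriv_fourier_le (K := 0) (N := (N : ℕ∞))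
    (f := f) (by exact_mod_cast hf) (fun k q hk hq => by
      obtain rfl : k = 0 := by simpa using hk
      simpa using hint q (by exact_mod_cast hq)) (k := 0) (n := n) le_rfl (by exact_mod_cast hn) w
  simp only [norm_iteratedFDeriv_zero, pow_zero, one_mul, zero_add, CharP.cast_eq_zero,
    mul_zero, Finset.sum_product, Finset.range_one, Finset.sum_singleton] at h
  refine h.trans ?_
  gcongr
  calc ∑ q ∈ Finset.range (n + 1), ∫ ξ, ‖iteratedFDeriv ℝ q f ξ‖
      ≤ ∑ _ ∈ Finset.range (n + 1), B :=
        Finset.sum_le_sum fun q hq => hB q (by have := Finset.mem_range.1 hq; omega)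
    _ = (n + 1) * B := by simp

lemma exists_norm_fourier_le_decayWeight {N : ℕ} (hN : finrank ℝ F < N) :
    ∃ C > 0, ∀ (f : F → G) (B : ℝ), ContDiff ℝ N f →
      (∀ q ≤ N, ∀ ξ, ‖iteratedFDeriv ℝ q f ξ‖ ≤ B * decayWeight N ξ) →
      ∀ w, ‖𝓕 f w‖ ≤ C * B * decayWeight N w := by
  set I := ∫ ξ : F, decayWeight N ξ
  have hI : 0 ≤ I := integral_nonneg fun ξ => (decayWeight_pos N ξ).le
  refine ⟨2 ^ (N - 1) * (I + 2 ^ N * ((N + 1) * I)) + 1, by positivity, fun f B hf hfB w => ?_⟩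
  have hB : 0 ≤ B := nonneg_of_mul_nonneg_left
    ((norm_nonneg _).trans (hfB 0 (Nat.zero_le N) 0)) (decayWeight_pos N 0)
  have hweight : Integrable (fun ξ : F => B * decayWeight N ξ) :=
    (integrable_decayWeight volume hN).const_mul B
  have hint (q : ℕ) (hq : q ≤ N) : Integrable fun ξ => ‖iteratedFDeriv ℝ q f ξ‖ :=
    hweight.mono' (hf.continuous_iteratedFDeriv (by exact_mod_cast hq)).norm.aestronglyMeasurable
      (.of_forall fun ξ => by simpa using hfB q hq ξ)
  have hle (q : ℕ) (hq : q ≤ N) : ∫ ξ, ‖iteratedFDeriv ℝ q f ξ‖ ≤ B * I := by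
    rw [← integral_const_mul]
    exact integral_mono (hint q hq) hweight (hfB q hq)
  have hzero : ‖𝓕 f w‖ ≤ B * I := by
    simpa using pow_mul_norm_fourier_le hf hint hle (Nat.zero_le N) w
  have hpow : ‖w‖ ^ N * ‖𝓕 f w‖ ≤ 2 ^ N * ((N + 1) * (B * I)) :=
    pow_mul_norm_fourier_le hf hint hle le_rfl w
  rw [decayWeight, ← div_eq_mul_inv, le_div_iff₀ (by positivity)]
  calc ‖𝓕 f w‖ * (1 + ‖w‖) ^ N ≤ ‖𝓕 f w‖ * (2 ^ (N - 1) * (1 ^ N + ‖w‖ ^ N)) := by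
        gcongr
        exact add_pow_le zero_le_one (norm_nonneg w) N
    _ = 2 ^ (N - 1) * (‖𝓕 f w‖ + ‖w‖ ^ N * ‖𝓕 f w‖) := by ring
    _ ≤ 2 ^ (N - 1) * (B * I + 2 ^ N * ((N + 1) * (B * I))) :=
        mul_le_mul_of_nonneg_left (add_le_add hzero hpow) (by positivity)
    _ ≤ (2 ^ (N - 1) * (I + 2 ^ N * ((N + 1) * I)) + 1) * B := by linarith

lemma integrable_slice (a : 𝓢(X × F, G)) (x : X) : Integrable fun ξ => a (x, ξ) := by
  obtain ⟨C, -, ha⟩ := exists_norm_iteratedFDeriv_le a 0 (finrank ℝ F + 1) 0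
  exact integrable_of_norm_le_decayWeight (Nat.lt_succ_self _) (by fun_prop)
    fun ξ => by simpa using ha 0 le_rfl x ξ

lemma exists_norm_fourier_slice_le (a : 𝓢(X × F, G)) (k : ℕ) {N : ℕ} (hN : finrank ℝ F < N) :
    ∃ C > 0, ∀ x w, ‖𝓕 (fun ξ => a (x, ξ)) w‖ ≤ C * decayWeight k x * decayWeight N w := by
  obtain ⟨C, hC, hfourier⟩ := exists_norm_fourier_le_decayWeight (F := F) (G := G) hN
  obtain ⟨B, hB, ha⟩ := exists_norm_iteratedFDeriv_le a k N N
  refine ⟨C * B, by positivity, fun x w => ?_⟩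
  rw [mul_assoc C]
  exact hfourier _ _ ((a.smooth N).comp (by fun_prop)) (fun q hq ξ =>
    (norm_iteratedFDeriv_slice_le q (a.smooth q) x ξ).trans (ha q hq x ξ)) w

lemma exists_norm_fourier_slice_sub_le (a : 𝓢(X × F, G)) {N : ℕ} (hN : finrank ℝ F < N) :
    ∃ C > 0, ∀ x y w, ‖𝓕 (fun ξ => a (x, ξ)) w - 𝓕 (fun ξ => a (y, ξ)) w‖ ≤
      C * ‖x - y‖ * decayWeight N w := by
  obtain ⟨C, hC, hfourier⟩ := exists_norm_fourier_le_decayWeight (F := F) (G := G) hN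
  obtain ⟨B, hB, ha⟩ := exists_norm_iteratedFDeriv_sub_le a N N
  refine ⟨C * B, by positivity, fun x y w => ?_⟩
  have hsub : 𝓕 (fun ξ => a (x, ξ)) w - 𝓕 (fun ξ => a (y, ξ)) w =
      𝓕 (fun ξ => a (x, ξ) - a (y, ξ)) w := by
    simp only [Real.fourier_eq, smul_sub]
    exact (integral_sub ((Real.fourierIntegral_convergent_iff w).2 (integrable_slice a x))
      ((Real.fourierIntegral_convergent_iff w).2 (integrable_slice a y))).symm
  rw [hsub, mul_assoc C]
  exact hfourier _ _ (((a.smooth N).comp (by fun_prop)).sub ((a.smooth N).comp (by fun_prop)))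
    (fun q hq ξ => ha q hq x y ξ) w

end PartialFourier

section KernelOperators

variable {E F : Type*} [NormedAddCommGroup E] [NormedAddCommGroup F]

/-- The projection `x ↦ x̂ = (x', 0)`. -/
def proj (x : E × F) : E × F := (x.1, 0)

lemma norm_proj_le (x : E × F) : ‖proj x‖ ≤ ‖x‖ := by
  simpa [proj] using norm_fst_le x

@[fun_prop]
lemma continuous_proj : Continuous (proj : E × F → E × F) := by
  unfold proj
  fun_prop

variable [NormedSpace ℝ E] [NormedSpace ℝ F]

lemma proj_add_smul_eq (x w : E × F) (t : ℝ) :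
    proj x + t • w = (x.1 + t • w.1, t • w.2) := by
  simp [proj, Prod.ext_iff]

lemma proj_proj_add_smul (x w : E × F) (t : ℝ) :
    proj (proj x + t • w) = proj x + t • proj w := by
  simp [proj]

lemma norm_mul_sub_proj_add_smul_le {N : ℕ} {t A B : ℝ} (ht : 0 ≤ t) (hB₀ : 0 ≤ B)
    {K₁ K₂ : E × F → E × F → ℂ} {x : E × F}
    (hA : ∀ w, ‖K₁ x w‖ ≤ A * decayWeight N x * decayWeight (N + N + 1) w)
    (hB : ∀ y z v, ‖K₂ y v - K₂ z v‖ ≤ B * ‖y - z‖ * decayWeight N v) (v w : E × F) :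
    ‖K₁ x w * (K₂ (proj x + t • w) (v - proj w) - K₂ (proj x) (v - proj w))‖ ≤
      A * B * t * decayWeight N x * decayWeight N v * decayWeight N w := by
  have hA₀ : 0 ≤ A := nonneg_of_mul_nonneg_left (nonneg_of_mul_nonneg_left
    ((norm_nonneg _).trans (hA 0)) (decayWeight_pos _ 0)) (decayWeight_pos N x)
  have hx := (decayWeight_pos N x).le
  have hw := (decayWeight_pos N w).le
  have hv := (decayWeight_pos N (v - proj w)).le
  have hlip : ‖K₂ (proj x + t • w) (v - proj w) - K₂ (proj x) (v - proj w)‖ ≤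
      B * (t * ‖w‖) * decayWeight N (v - proj w) := by
    simpa [norm_smul, abs_of_nonneg ht] using hB (proj x + t • w) (proj x) (v - proj w)
  rw [norm_mul]
  calc _ ≤ A * decayWeight N x * decayWeight (N + N + 1) w *
          (B * (t * ‖w‖) * decayWeight N (v - proj w)) :=
        mul_le_mul (hA w) hlip (norm_nonneg _) ((norm_nonneg _).trans (hA w))
    _ = A * B * t * decayWeight N x *
          (‖w‖ * decayWeight (N + N + 1) w * decayWeight N (v - proj w)) := by ring
    _ ≤ A * B * t * decayWeight N x *
          (decayWeight (N + N) w * decayWeight N (v - proj w)) := by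
        gcongr
        exact norm_mul_decayWeight_succ_le (N + N) w
    _ = A * B * t * decayWeight N x *
          (decayWeight N w * (decayWeight N w * decayWeight N (v - proj w))) := by
        rw [decayWeight_add]
        ring
    _ ≤ A * B * t * decayWeight N x * (decayWeight N w * decayWeight N v) := by
        gcongr
        exact decayWeight_mul_decayWeight_sub_le N (norm_proj_le w) v
    _ = A * B * t * decayWeight N x * decayWeight N v * decayWeight N w := by ring

variable [MeasureSpace E] [BorelSpace E] [FiniteDimensional ℝ F] [MeasureSpace F] [BorelSpace F]

/-- The operator `u ↦ ∫ K(x, w) u(x̂ + t w) dw` with kernel `K`, where `x̂ = (x', 0)`. In these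
coordinates the kernel of `Op_h^Λ(a)`, for `t = 2πh`, does not depend on `h`. -/
def kernelOp (t : ℝ) (K : E × F → E × F → ℂ) (u : E × F → ℂ) (x : E × F) : ℂ :=
  ∫ w, K x w * u (proj x + t • w)

/-- The kernel of the composition of two operators `kernelOp t`. -/
def compKernel (t : ℝ) (K₁ K₂ : E × F → E × F → ℂ) (x v : E × F) : ℂ :=
  ∫ w, K₁ x w * K₂ (proj x + t • w) (v - proj w)

lemma lintegral_mul_sq_le {α : Type*} [MeasurableSpace α] (μ : Measure α) {p f : α → ℝ≥0∞}
    (hp : Measurable p) (hf : Measurable f) :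
    (∫⁻ x, p x * f x ∂μ) ^ 2 ≤ (∫⁻ x, p x ∂μ) * ∫⁻ x, p x * f x ^ 2 ∂μ := by
  have hsqrt (z : ℝ≥0∞) : z ^ (1 / 2 : ℝ) * z ^ (1 / 2 : ℝ) = z := by
    rw [← ENNReal.rpow_add_of_nonneg _ _ (by norm_num) (by norm_num)]
    norm_num
  have hsq (z : ℝ≥0∞) : (z ^ (1 / 2 : ℝ)) ^ 2 = z := by rw [pow_two, hsqrt]
  have h := ENNReal.lintegral_mul_le_Lp_mul_Lq μ Real.HolderConjugate.two_two
    (f := fun x => p x ^ (1 / 2 : ℝ)) (g := fun x => p x ^ (1 / 2 : ℝ) * f x)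
    (hp.pow_const _).aemeasurable ((hp.pow_const _).mul hf).aemeasurable
  simp only [Pi.mul_apply, ← mul_assoc, hsqrt] at h
  simp only [ENNReal.rpow_two, mul_pow, hsq] at h
  calc (∫⁻ x, p x * f x ∂μ) ^ 2
      ≤ ((∫⁻ x, p x ∂μ) ^ (1 / 2 : ℝ) * (∫⁻ x, p x * f x ^ 2 ∂μ) ^ (1 / 2 : ℝ)) ^ 2 := by gcongr
    _ = (∫⁻ x, p x ∂μ) * ∫⁻ x, p x * f x ^ 2 ∂μ := by rw [mul_pow, hsq, hsq]

lemma sq_eLpNorm_two {α ε : Type*} [MeasurableSpace α] [ENorm ε] (μ : Measure α) (f : α → ε) :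
    eLpNorm f 2 μ ^ 2 = ∫⁻ x, ‖f x‖ₑ ^ 2 ∂μ := by
  simpa using eLpNorm_nnreal_pow_eq_lintegral (μ := μ) (f := f) (p := 2) two_ne_zero

lemma enorm_kernelOp_le {t A : ℝ} {N : ℕ} {K : E × F → E × F → ℂ} {u : E × F → ℂ}
    (hK : ∀ x w, ‖K x w‖ ≤ A * decayWeight N x * decayWeight N w) (hu : Measurable u)
    (x : E × F) :
    ‖kernelOp t K u x‖ₑ ≤ ENNReal.ofReal A * ENNReal.ofReal (decayWeight N x) *
      ∫⁻ w : E × F, ENNReal.ofReal (decayWeight N w) * ‖u (proj x + t • w)‖ₑ := by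
  have hA : 0 ≤ A * decayWeight N x :=
    nonneg_of_mul_nonneg_left ((norm_nonneg _).trans (hK x 0)) (decayWeight_pos N 0)
  rw [← lintegral_const_mul _ (by fun_prop)]
  refine (enorm_integral_le_lintegral_enorm _).trans (lintegral_mono fun w => ?_)
  rw [enorm_mul, ← mul_assoc, ← ENNReal.ofReal_mul' (decayWeight_pos N x).le,
    ← ENNReal.ofReal_mul hA, ← ofReal_norm]
  gcongr
  exact hK x w

lemma sq_enorm_kernelOp_le {t A : ℝ} {N : ℕ} {K : E × F → E × F → ℂ} {u : E × F → ℂ}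
    (hK : ∀ x w, ‖K x w‖ ≤ A * decayWeight N x * decayWeight N w) (hu : Measurable u)
    (x : E × F) :
    ‖kernelOp t K u x‖ₑ ^ 2 ≤
      ENNReal.ofReal A ^ 2 * (∫⁻ w : E × F, ENNReal.ofReal (decayWeight N w)) *
        (ENNReal.ofReal (decayWeight N x.2) *
          ∫⁻ w : E × F, ENNReal.ofReal (decayWeight N w.1) * ‖u (proj x + t • w)‖ₑ ^ 2) := by
  have hx : ENNReal.ofReal (decayWeight N x) ^ 2 ≤ ENNReal.ofReal (decayWeight N x.2) := by
    rw [pow_two]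
    exact (mul_le_of_le_one_left' (ENNReal.ofReal_le_one.2 (decayWeight_le_one N x))).trans
      (ENNReal.ofReal_le_ofReal (decayWeight_le_of_norm_le N (norm_snd_le x)))
  calc ‖kernelOp t K u x‖ₑ ^ 2
      ≤ (ENNReal.ofReal A * ENNReal.ofReal (decayWeight N x) *
          ∫⁻ w : E × F, ENNReal.ofReal (decayWeight N w) * ‖u (proj x + t • w)‖ₑ) ^ 2 := by
        gcongr
        exact enorm_kernelOp_le hK hu x
    _ ≤ ENNReal.ofReal A ^ 2 * ENNReal.ofReal (decayWeight N x) ^ 2 *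
          ((∫⁻ w : E × F, ENNReal.ofReal (decayWeight N w)) *
            ∫⁻ w : E × F, ENNReal.ofReal (decayWeight N w) * ‖u (proj x + t • w)‖ₑ ^ 2) := by
        rw [mul_pow, mul_pow]
        gcongr
        exact lintegral_mul_sq_le _ (by fun_prop) (by fun_prop)
    _ ≤ ENNReal.ofReal A ^ 2 * ENNReal.ofReal (decayWeight N x.2) *
          ((∫⁻ w : E × F, ENNReal.ofReal (decayWeight N w)) *
            ∫⁻ w : E × F, ENNReal.ofReal (decayWeight N w.1) * ‖u (proj x + t • w)‖ₑ ^ 2) := by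
        gcongr with w
        exact decayWeight_le_of_norm_le N (norm_fst_le w)
    _ = _ := by ring

variable [FiniteDimensional ℝ E] [(volume : Measure E).IsAddHaarMeasure]
  [(volume : Measure F).IsAddHaarMeasure]

instance isAddHaarMeasure_volume_prod : (volume : Measure (E × F)).IsAddHaarMeasure :=
  Measure.prod.instIsAddHaarMeasure volume volume

lemma lintegral_comp_smul {f : F → ℝ≥0∞} (hf : Measurable f) {t : ℝ} (ht : t ≠ 0) :
    ∫⁻ s, f (t • s) = ENNReal.ofReal |(t ^ finrank ℝ F)⁻¹| * ∫⁻ s, f s := by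
  rw [← lintegral_map hf (measurable_const_smul t), Measure.map_addHaar_smul volume ht,
    lintegral_smul_measure, smul_eq_mul]

lemma lintegral_mul_lintegral_proj_add_smul {p : F → ℝ≥0∞} {q : E → ℝ≥0∞} {g : E × F → ℝ≥0∞}
    (hp : Measurable p) (hq : Measurable q) (hg : Measurable g) {t : ℝ} (ht : t ≠ 0) :
    ∫⁻ x : E × F, p x.2 * ∫⁻ w : E × F, q w.1 * g (proj x + t • w) =
      ENNReal.ofReal |(t ^ finrank ℝ F)⁻¹| * (∫⁻ s, p s) * (∫⁻ y, q y) * ∫⁻ z, g z := by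
  set Φ : F → ℝ≥0∞ := fun s => ∫⁻ y, g (y, s)
  have hΦ : Measurable Φ := hg.lintegral_prod_left'
  have hfst (w : E × F) :
      ∫⁻ x : E × F, p x.2 * (q w.1 * g (proj x + t • w)) =
        (∫⁻ s, p s) * (q w.1 * Φ (t • w.2)) := by
    have hfactor : ∀ s, ∫⁻ y, p s * (q w.1 * g (proj (y, s) + t • w)) =
        p s * (q w.1 * Φ (t • w.2)) := fun s => by
      rw [lintegral_const_mul _ (by fun_prop), lintegral_const_mul _ (by fun_prop)]
      simp only [proj_add_smul_eq]
      rw [lintegral_add_right_eq_self fun y => g (y, t • w.2)]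
    rw [Measure.volume_eq_prod, lintegral_prod_symm _ (by fun_prop)]
    simp only [hfactor]
    rw [lintegral_mul_const _ hp]
  calc ∫⁻ x : E × F, p x.2 * ∫⁻ w : E × F, q w.1 * g (proj x + t • w)
      = ∫⁻ x : E × F, ∫⁻ w : E × F, p x.2 * (q w.1 * g (proj x + t • w)) := by
        congr with x
        rw [lintegral_const_mul _ (by fun_prop)]
    _ = ∫⁻ w : E × F, (∫⁻ s, p s) * (q w.1 * Φ (t • w.2)) := by
        rw [lintegral_lintegral_swap (by fun_prop)]
        simp only [hfst]
    _ = (∫⁻ s, p s) * ((∫⁻ y, q y) * ∫⁻ s, Φ (t • s)) := by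
        rw [lintegral_const_mul _ (by fun_prop), Measure.volume_eq_prod,
          lintegral_prod_mul (f := q) (g := fun s => Φ (t • s)) (by fun_prop) (by fun_prop)]
    _ = (∫⁻ s, p s) * ((∫⁻ y, q y) * (ENNReal.ofReal |(t ^ finrank ℝ F)⁻¹| * ∫⁻ z, g z)) := by
        rw [lintegral_comp_smul hΦ ht, Measure.volume_eq_prod, lintegral_prod_symm _ (by fun_prop)]
    _ = _ := by ring

lemma exists_eLpNorm_kernelOp_le {N : ℕ} (hN : finrank ℝ (E × F) < N) :
    ∃ C > 0, ∀ t > 0, ∀ (A : ℝ) (K : E × F → E × F → ℂ) (u : E × F → ℂ),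
      (∀ x w, ‖K x w‖ ≤ A * decayWeight N x * decayWeight N w) → Measurable u →
      eLpNorm (kernelOp t K u) 2 volume ≤
        ENNReal.ofReal (C * A / √(t ^ finrank ℝ F)) * eLpNorm u 2 volume := by
  rw [finrank_prod] at hN
  set I := ∫ w : E × F, decayWeight N w
  set P := ∫ s : F, decayWeight N s
  set Q := ∫ y : E, decayWeight N y
  have hI : 0 < I := integral_decayWeight_pos volume (by rwa [finrank_prod])
  have hP : 0 < P := integral_decayWeight_pos volume (by omega)
  have hQ : 0 < Q := integral_decayWeight_pos volume (by omega)
  refine ⟨√(I * P * Q), by positivity, fun t ht A K u hK hu => ?_⟩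
  have hA : 0 ≤ A := nonneg_of_mul_nonneg_left (nonneg_of_mul_nonneg_left
    ((norm_nonneg _).trans (hK 0 0)) (decayWeight_pos N 0)) (decayWeight_pos N 0)
  have hconst : (√(I * P * Q) * A / √(t ^ finrank ℝ F)) ^ 2 =
      A ^ 2 * I * (|(t ^ finrank ℝ F)⁻¹| * P * Q) := by
    rw [div_pow, mul_pow, Real.sq_sqrt (by positivity), Real.sq_sqrt (by positivity),
      abs_of_pos (by positivity)]
    ring
  rw [← ENNReal.pow_le_pow_left_iff two_ne_zero, mul_pow, sq_eLpNorm_two, sq_eLpNorm_two,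
    ← ENNReal.ofReal_pow (by positivity), hconst]
  refine (lintegral_mono (sq_enorm_kernelOp_le hK hu)).trans_eq ?_
  rw [lintegral_const_mul _ (by fun_prop), lintegral_decayWeight volume (by rwa [finrank_prod]),
    lintegral_mul_lintegral_proj_add_smul (p := fun s => ENNReal.ofReal (decayWeight N s))
      (q := fun y => ENNReal.ofReal (decayWeight N y)) (g := fun z => ‖u z‖ₑ ^ 2)
      (by fun_prop) (by fun_prop) (by fun_prop) ht.ne',
    lintegral_decayWeight volume (by omega), lintegral_decayWeight volume (by omega)]
  rw [ENNReal.ofReal_mul (by positivity), ENNReal.ofReal_mul (by positivity),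
    ENNReal.ofReal_mul (by positivity), ENNReal.ofReal_mul (by positivity),
    ENNReal.ofReal_pow hA]
  ring

lemma integrable_kernelOp {N : ℕ} (hN : finrank ℝ (E × F) < N) {t A : ℝ} (ht : t ≠ 0)
    {K : E × F → E × F → ℂ} (hK : Continuous (Function.uncurry K))
    (hKA : ∀ x w, ‖K x w‖ ≤ A * decayWeight N x * decayWeight N w)
    {u : E × F → ℂ} (hu : Measurable u) (hint : Integrable u) : Integrable (kernelOp t K u) := by
  have hmeas : StronglyMeasurable fun p : (E × F) × (E × F) => K p.1 p.2 * u (proj p.1 + t • p.2) :=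
    hK.stronglyMeasurable.mul (by fun_prop : Measurable _).stronglyMeasurable
  have hbound (x : E × F) :
      ‖kernelOp t K u x‖ ≤ A * |(t ^ finrank ℝ (E × F))⁻¹| * (∫ v, ‖u v‖) * decayWeight N x := by
    have hA : 0 ≤ A * decayWeight N x :=
      nonneg_of_mul_nonneg_left ((norm_nonneg _).trans (hKA x 0)) (decayWeight_pos N 0)
    calc ‖kernelOp t K u x‖ ≤ ∫ w, A * decayWeight N x * ‖u (proj x + t • w)‖ := by
          refine norm_integral_le_of_norm_le
            (((hint.norm.comp_add_left (proj x)).comp_smul ht).const_mul _)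
            (.of_forall fun w => ?_)
          rw [norm_mul]
          gcongr
          exact (hKA x w).trans (mul_le_of_le_one_right hA (decayWeight_le_one N w))
      _ = A * |(t ^ finrank ℝ (E × F))⁻¹| * (∫ v, ‖u v‖) * decayWeight N x := by
          rw [integral_const_mul, Measure.integral_comp_smul volume fun v => ‖u (proj x + v)‖,
            integral_add_left_eq_self fun v => ‖u v‖, smul_eq_mul]
          ring
  exact integrable_of_norm_le_decayWeight hN hmeas.integral_prod_right.aestronglyMeasurable hbound

section Composition

variable {K₁ K₂ : E × F → E × F → ℂ} {x : E × F} (hK₁ : Integrable (K₁ x))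
  (hK₂ : Continuous (Function.uncurry K₂)) {M : ℝ} (hM : ∀ y v, ‖K₂ y v‖ ≤ M)

include hK₁ hK₂ hM

lemma integrable_prod_compKernel_integrand (s : ℝ) {t : ℝ} (ht : t ≠ 0) {u : E × F → ℂ}
    (hu : Integrable u) :
    Integrable (fun p : (E × F) × (E × F) =>
      K₁ x p.1 * K₂ (proj x + s • p.1) (p.2 - proj p.1) * u (proj x + t • p.2))
      (volume.prod volume) := by
  have hprod := hK₁.mul_prod ((hu.comp_add_left (proj x)).comp_smul ht)
  have hcont : Continuous fun p : (E × F) × (E × F) => K₂ (proj x + s • p.1) (p.2 - proj p.1) :=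
    hK₂.comp (by fun_prop : Continuous fun p : (E × F) × (E × F) =>
      (proj x + s • p.1, p.2 - proj p.1))
  refine (hprod.bdd_mul hcont.aestronglyMeasurable (.of_forall fun p => hM _ _)).congr
    (.of_forall fun p => ?_)
  ring

lemma integrable_compKernel_mul (s : ℝ) {t : ℝ} (ht : t ≠ 0) {u : E × F → ℂ}
    (hu : Integrable u) :
    Integrable fun v => compKernel s K₁ K₂ x v * u (proj x + t • v) := by
  simpa only [compKernel, integral_mul_const] using
    (integrable_prod_compKernel_integrand hK₁ hK₂ hM s ht hu).integral_prod_right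

lemma kernelOp_kernelOp {t : ℝ} (ht : t ≠ 0) {u : E × F → ℂ} (hu : Integrable u) :
    kernelOp t K₁ (kernelOp t K₂ u) x = kernelOp t (compKernel t K₁ K₂) u x := by
  have hshift (w : E × F) : kernelOp t K₂ u (proj x + t • w) =
      ∫ v, K₂ (proj x + t • w) (v - proj w) * u (proj x + t • v) := by
    rw [kernelOp, ← integral_sub_right_eq_self _ (proj w)]
    congr with v
    rw [proj_proj_add_smul, smul_sub, add_assoc, add_sub_cancel]
  calc kernelOp t K₁ (kernelOp t K₂ u) x
      = ∫ w, ∫ v, K₁ x w * K₂ (proj x + t • w) (v - proj w) * u (proj x + t • v) := by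
        simp only [kernelOp.eq_def t K₁, hshift, mul_assoc, integral_const_mul]
    _ = ∫ v, ∫ w, K₁ x w * K₂ (proj x + t • w) (v - proj w) * u (proj x + t • v) :=
        integral_integral_swap (integrable_prod_compKernel_integrand hK₁ hK₂ hM t ht hu)
    _ = kernelOp t (compKernel t K₁ K₂) u x := by
        simp only [kernelOp, compKernel, integral_mul_const]

lemma norm_compKernel_sub_compKernel_zero_le {N : ℕ} (hN : finrank ℝ (E × F) < N) {t A B : ℝ}
    (ht : 0 ≤ t) (hB₀ : 0 ≤ B)
    (hA : ∀ w, ‖K₁ x w‖ ≤ A * decayWeight N x * decayWeight (N + N + 1) w)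
    (hB : ∀ y z v, ‖K₂ y v - K₂ z v‖ ≤ B * ‖y - z‖ * decayWeight N v) (v : E × F) :
    ‖compKernel t K₁ K₂ x v - compKernel 0 K₁ K₂ x v‖ ≤
      A * B * (∫ w : E × F, decayWeight N w) * t * decayWeight N x * decayWeight N v := by
  have hint (s : ℝ) : Integrable fun w => K₁ x w * K₂ (proj x + s • w) (v - proj w) :=
    hK₁.mul_bdd (c := M) (hK₂.comp (by fun_prop : Continuous fun w : E × F =>
      (proj x + s • w, v - proj w))).aestronglyMeasurable (.of_forall fun _ => hM _ _)
  have hsub : compKernel t K₁ K₂ x v - compKernel 0 K₁ K₂ x v =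
      ∫ w, K₁ x w * (K₂ (proj x + t • w) (v - proj w) - K₂ (proj x) (v - proj w)) := by
    rw [compKernel, compKernel, ← integral_sub (hint t) (hint 0)]
    simp only [zero_smul, add_zero, mul_sub]
  rw [hsub]
  refine (norm_integral_le_of_norm_le ((integrable_decayWeight volume hN).const_mul _)
    (.of_forall (norm_mul_sub_proj_add_smul_le ht hB₀ hA hB v))).trans_eq ?_
  rw [integral_const_mul]
  ring

end Composition

theorem exists_eLpNorm_kernelOp_kernelOp_sub_le {N : ℕ} (hN : finrank ℝ (E × F) < N)
    {K₁ K₂ : E × F → E × F → ℂ} {A A' B : ℝ} (hA₀ : 0 < A)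
    (hA'₀ : 0 < A') (hB₀ : 0 < B) (hK₁ : ∀ x, Continuous (K₁ x))
    (hA : ∀ x w, ‖K₁ x w‖ ≤ A * decayWeight N x * decayWeight (N + N + 1) w)
    (hK₂ : Continuous (Function.uncurry K₂))
    (hA' : ∀ x w, ‖K₂ x w‖ ≤ A' * decayWeight N x * decayWeight N w)
    (hB : ∀ x y v, ‖K₂ x v - K₂ y v‖ ≤ B * ‖x - y‖ * decayWeight N v) :
    ∃ C > 0, ∀ t > 0, ∀ u : E × F → ℂ, Measurable u → Integrable u →
      eLpNorm (fun x => kernelOp t K₁ (kernelOp t K₂ u) x -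
        kernelOp t (compKernel 0 K₁ K₂) u x) 2 volume ≤
        ENNReal.ofReal (C * t / √(t ^ finrank ℝ F)) * eLpNorm u 2 volume := by
  obtain ⟨C, hC, hL2⟩ := exists_eLpNorm_kernelOp_le (E := E) (F := F) hN
  set D := A * B * ∫ w : E × F, decayWeight N w
  have hD : 0 < D := by
    have := integral_decayWeight_pos (E := E × F) volume hN
    positivity
  refine ⟨C * D, by positivity, fun t ht u hu hint => ?_⟩
  have hK₁i (x : E × F) : Integrable (K₁ x) :=
    integrable_of_norm_le_decayWeight (by omega) (hK₁ x).aestronglyMeasurable (hA x)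
  have hM (x v : E × F) : ‖K₂ x v‖ ≤ A' := (hA' x v).trans <| by
    have := decayWeight_le_one N x
    have := decayWeight_le_one N v
    rw [mul_assoc]
    exact mul_le_of_le_one_right hA'₀.le (mul_le_one₀ ‹_› (decayWeight_pos N v).le ‹_›)
  have hdiff : (fun x => kernelOp t K₁ (kernelOp t K₂ u) x - kernelOp t (compKernel 0 K₁ K₂) u x) =
      kernelOp t (compKernel t K₁ K₂ - compKernel 0 K₁ K₂) u := by
    ext x
    rw [kernelOp_kernelOp (hK₁i x) hK₂ hM ht.ne' hint]
    simp only [kernelOp]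
    rw [← integral_sub (integrable_compKernel_mul (hK₁i x) hK₂ hM t ht.ne' hint)
      (integrable_compKernel_mul (hK₁i x) hK₂ hM 0 ht.ne' hint)]
    simp only [Pi.sub_apply, sub_mul]
  rw [hdiff, mul_assoc]
  exact hL2 t ht (D * t) _ u (fun x => norm_compKernel_sub_compKernel_zero_le
    (hK₁i x) hK₂ hM hN ht.le hB₀.le (hA x) hB) hu

end KernelOperators

section SymbolKernel

open WithLp

variable {E F : Type*} [NormedAddCommGroup E] [NormedAddCommGroup F]

lemma decayWeight_toLp_le (N : ℕ) (w : E × F) : decayWeight N (toLp 2 w) ≤ decayWeight N w :=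
  decayWeight_le_of_norm_le N <|
    max_le (WithLp.norm_fst_le E (toLp 2 w)) (WithLp.norm_snd_le E (toLp 2 w))

variable [InnerProductSpace ℝ E] [InnerProductSpace ℝ F]

lemma finrank_withLp_prod : finrank ℝ (WithLp 2 (E × F)) = finrank ℝ (E × F) :=
  (WithLp.linearEquiv 2 ℝ (E × F)).finrank_eq

lemma inner_toLp_proj_left (w ξ : E × F) :
    ⟪toLp 2 (proj w), toLp 2 ξ⟫ = ⟪toLp 2 w, toLp 2 (proj ξ)⟫ := by
  simp [prod_inner_apply, proj]

variable [FiniteDimensional ℝ E] [MeasurableSpace E] [BorelSpace E] [FiniteDimensional ℝ F]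
  [MeasurableSpace F] [BorelSpace F] {X : Type*}

/-- The Fourier transform of the symbol `a` in its second variable: the kernel, in the sense of
`kernelOp`, of the quantization of `a`. The product `E × F` has the supremum norm, so the transform
is taken on its Euclidean counterpart `WithLp 2 (E × F)`. -/
def symbolKernel (a : X × (E × F) → ℂ) (x : X) (w : E × F) : ℂ :=
  𝓕 (fun ξ : WithLp 2 (E × F) => a (x, ofLp ξ)) (toLp 2 w)

lemma integral_comp_ofLp (f : E × F → ℂ) :
    ∫ ξ : WithLp 2 (E × F), f (ofLp ξ) = ∫ ξ, f ξ :=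
  (volume_preserving_ofLp E F).integral_comp
    (MeasurableEquiv.toLp 2 (E × F)).symm.measurableEmbedding f

lemma integrable_comp_ofLp_iff {f : E × F → ℂ} :
    Integrable (fun ξ : WithLp 2 (E × F) => f (ofLp ξ)) ↔ Integrable f :=
  (volume_preserving_ofLp E F).integrable_comp_emb
    (MeasurableEquiv.toLp 2 (E × F)).symm.measurableEmbedding

lemma symbolKernel_eq_integral (a : X × (E × F) → ℂ) (x : X) (w : E × F) :
    symbolKernel a x w = ∫ ξ : E × F, 𝐞 (-⟪toLp 2 ξ, toLp 2 w⟫) • a (x, ξ) := by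
  rw [symbolKernel, Real.fourier_eq, ← integral_comp_ofLp]

lemma integral_fourierChar_smul_symbolKernel {a : X × (E × F) → ℂ} {x : X}
    (ha : Continuous fun ξ => a (x, ξ)) (hint : Integrable fun ξ => a (x, ξ))
    (hK : Integrable (symbolKernel a x)) (η : E × F) :
    ∫ w : E × F, 𝐞 ⟪toLp 2 w, toLp 2 η⟫ • symbolKernel a x w = a (x, η) := by
  have hinv := (ha.comp (prod_continuous_ofLp 2 E F)).fourierInv_fourier_eq
    (integrable_comp_ofLp_iff.2 hint) (integrable_comp_ofLp_iff.2 hK)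
  rw [← integral_comp_ofLp]
  exact (Real.fourierInv_eq _ _).symm.trans (congrFun hinv (toLp 2 η))

section Schwartz

variable [NormedAddCommGroup X] [NormedSpace ℝ X]

/-- The symbol `a` on the Euclidean counterpart `WithLp 2 (E × F)` of the frequency space. -/
def euclideanSymbol (a : 𝓢(X × (E × F), ℂ)) : 𝓢(X × WithLp 2 (E × F), ℂ) :=
  compCLMOfContinuousLinearEquiv ℝ
    ((ContinuousLinearEquiv.refl ℝ X).prodCongr (prodContinuousLinearEquiv 2 ℝ E F)) a

lemma symbolKernel_eq_fourier_euclideanSymbol (a : 𝓢(X × (E × F), ℂ)) (x : X) (w : E × F) :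
    symbolKernel a x w = 𝓕 (fun ξ => euclideanSymbol a (x, ξ)) (toLp 2 w) := rfl

lemma integrable_symbol_slice (a : 𝓢(X × (E × F), ℂ)) (x : X) : Integrable fun ξ => a (x, ξ) :=
  integrable_comp_ofLp_iff.1 (integrable_slice (euclideanSymbol a) x)

lemma exists_norm_symbolKernel_le (a : 𝓢(X × (E × F), ℂ)) (k : ℕ) {N : ℕ}
    (hN : finrank ℝ (E × F) < N) :
    ∃ C > 0, ∀ x w, ‖symbolKernel a x w‖ ≤ C * decayWeight k x * decayWeight N w := by
  obtain ⟨C, hC, ha⟩ := exists_norm_fourier_slice_le (euclideanSymbol a) k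
    (finrank_withLp_prod.trans_lt hN)
  refine ⟨C, hC, fun x w => ?_⟩
  rw [symbolKernel_eq_fourier_euclideanSymbol]
  refine (ha x (toLp 2 w)).trans ?_
  have := decayWeight_pos k x
  gcongr
  exact decayWeight_toLp_le N w

lemma exists_norm_symbolKernel_sub_le (a : 𝓢(X × (E × F), ℂ)) {N : ℕ}
    (hN : finrank ℝ (E × F) < N) :
    ∃ C > 0, ∀ x y w,
      ‖symbolKernel a x w - symbolKernel a y w‖ ≤ C * ‖x - y‖ * decayWeight N w := by
  obtain ⟨C, hC, ha⟩ := exists_norm_fourier_slice_sub_le (euclideanSymbol a)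
    (finrank_withLp_prod.trans_lt hN)
  refine ⟨C, hC, fun x y w => ?_⟩
  simp only [symbolKernel_eq_fourier_euclideanSymbol]
  refine (ha x y (toLp 2 w)).trans ?_
  gcongr
  exact decayWeight_toLp_le N w

lemma continuous_symbolKernel_apply (a : 𝓢(X × (E × F), ℂ)) (x : X) :
    Continuous (symbolKernel a x) :=
  (VectorFourier.fourierIntegral_continuous Real.continuous_fourierChar continuous_inner
    (integrable_slice (euclideanSymbol a) x)).comp (prod_continuous_toLp 2 E F)

lemma continuous_symbolKernel (a : 𝓢(X × (E × F), ℂ)) :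
    Continuous (Function.uncurry (symbolKernel a)) := by
  obtain ⟨C, hC, ha⟩ := exists_norm_symbolKernel_sub_le a (Nat.lt_succ_self _)
  refine continuous_prod_of_continuous_lipschitzWith _ C.toNNReal
    (continuous_symbolKernel_apply a) fun w => .of_dist_le_mul fun x y => ?_
  rw [dist_eq_norm, dist_eq_norm, Real.coe_toNNReal _ hC.le]
  exact (ha x y w).trans (mul_le_of_le_one_right (by positivity) (decayWeight_le_one _ w))

lemma integrable_symbolKernel (a : 𝓢(X × (E × F), ℂ)) (x : X) :
    Integrable (symbolKernel a x) := by
  obtain ⟨C, -, ha⟩ := exists_norm_symbolKernel_le a 0 (Nat.lt_succ_self _)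
  exact integrable_of_norm_le_decayWeight (Nat.lt_succ_self _)
    (continuous_symbolKernel_apply a x).aestronglyMeasurable (ha x)

end Schwartz

lemma symbolKernel_eq_compKernel_zero (a b : 𝓢((E × F) × (E × F), ℂ))
    {c : (E × F) × (E × F) → ℂ} (hc : ∀ x ξ, c (x, ξ) = a (x, proj ξ) * b (proj x, ξ)) :
    symbolKernel c = compKernel 0 (symbolKernel a) (symbolKernel b) := by
  ext x v
  have hphase (w ξ : E × F) : 𝐞 (-⟪toLp 2 ξ, toLp 2 (v - proj w)⟫) =
      𝐞 (-⟪toLp 2 ξ, toLp 2 v⟫) * 𝐞 ⟪toLp 2 w, toLp 2 (proj ξ)⟫ := by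
    rw [← AddChar.map_add_eq_mul, ← inner_toLp_proj_left, real_inner_comm, toLp_sub,
      inner_sub_left, real_inner_comm (toLp 2 v), neg_sub, sub_eq_neg_add]
  have hint : Integrable (fun p : (E × F) × (E × F) => symbolKernel a x p.1 *
      𝐞 (-⟪toLp 2 p.2, toLp 2 (v - proj p.1)⟫) • b (proj x, p.2))
      (volume.prod volume) := by
    have hcont : Continuous fun p : (E × F) × (E × F) =>
        (𝐞 (-⟪toLp 2 p.2, toLp 2 (v - proj p.1)⟫) : ℂ) := by
      fun_prop
    refine (((integrable_symbolKernel a x).mul_prod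
      (integrable_symbol_slice b (proj x))).bdd_mul (c := 1) hcont.aestronglyMeasurable
        (.of_forall fun p => (Circle.norm_coe _).le)).congr (.of_forall fun p => ?_)
    simp only [Circle.smul_def, smul_eq_mul]
    ring
  calc symbolKernel c x v
      = ∫ ξ, ∫ w, symbolKernel a x w *
          𝐞 (-⟪toLp 2 ξ, toLp 2 (v - proj w)⟫) • b (proj x, ξ) := by
        rw [symbolKernel_eq_integral]
        congr with ξ
        rw [hc, ← integral_fourierChar_smul_symbolKernel (a.continuous.comp (by fun_prop))
          (integrable_symbol_slice a x) (integrable_symbolKernel a x), ← integral_mul_const,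
          Circle.smul_def, smul_eq_mul, ← integral_const_mul]
        congr with w
        simp only [hphase, Circle.smul_def, smul_eq_mul, Circle.coe_mul]
        ring
    _ = ∫ w, ∫ ξ, symbolKernel a x w *
          𝐞 (-⟪toLp 2 ξ, toLp 2 (v - proj w)⟫) • b (proj x, ξ) :=
        (integral_integral_swap hint).symm
    _ = compKernel 0 (symbolKernel a) (symbolKernel b) x v := by
        simp only [compKernel, zero_smul, add_zero, symbolKernel_eq_integral b,
          integral_const_mul]

end SymbolKernel

section Quantization

open WithLp

variable {m : ℕ} {h : ℝ}

lemma finrank_V (m : ℕ) : finrank ℝ (V m) = m + 1 := by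
  simp

lemma OpL_eq_kernelOp (hh : 0 < h) {a : V m × V m → ℂ} {u : V m → ℂ} {x : V m}
    (ha : Integrable fun ξ => a (x, ξ)) (hu : Integrable u) :
    OpL m h a u x = kernelOp (2 * Real.pi * h) (symbolKernel a) u x := by
  set t := 2 * Real.pi * h with ht
  have ht₀ : 0 < t := by positivity
  let e (y ξ : V m) : Circle := 𝐞 (-⟪toLp 2 ξ, toLp 2 (t⁻¹ • (y - proj x))⟫)
  have hphase (y ξ : V m) :
      Complex.exp (Complex.I * Complex.ofReal ((⟪x.1, ξ.1⟫ - (⟪y.1, ξ.1⟫ + y.2 * ξ.2)) / h)) =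
        e y ξ := by
    rw [Real.fourierChar_apply, mul_comm Complex.I]
    congr 3
    simp only [toLp_smul, toLp_sub, inner_smul_right, inner_sub_right, prod_inner_apply, proj,
      inner_zero_right, add_zero, real_inner_comm ξ.1, ht]
    simp only [RCLike.inner_apply, conj_trivial]
    field_simp
    ring
  have hint : Integrable (fun p : V m × V m => e p.1 p.2 * a (x, p.2) * u p.1)
      (volume.prod volume) := by
    have he : Continuous fun p : V m × V m => (e p.1 p.2 : ℂ) := by fun_prop
    refine ((hu.mul_prod ha).bdd_mul (c := 1) he.aestronglyMeasurable
      (.of_forall fun p => (Circle.norm_coe _).le)).congr (.of_forall fun p => ?_)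
    ring
  calc OpL m h a u x
      = (t ^ (m + 1))⁻¹ • ∫ y, ∫ ξ, e y ξ * a (x, ξ) * u y := by
        simp only [OpL, hphase]
        rw [← integral_prod _ hint]
        rfl
    _ = (t ^ (m + 1))⁻¹ • ∫ y, symbolKernel a x (t⁻¹ • (y - proj x)) * u y := by
        simp only [e, integral_mul_const, symbolKernel_eq_integral, Circle.smul_def, smul_eq_mul]
    _ = ∫ w, symbolKernel a x (t⁻¹ • (proj x + t • w - proj x)) * u (proj x + t • w) := by
        rw [Measure.integral_comp_smul volume
            fun w => symbolKernel a x (t⁻¹ • (proj x + w - proj x)) * u (proj x + w),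
          integral_add_left_eq_self fun y => symbolKernel a x (t⁻¹ • (y - proj x)) * u y,
          abs_of_pos (by positivity), finrank_V]
    _ = kernelOp t (symbolKernel a) u x := by
        simp only [kernelOp, add_sub_cancel_left, inv_smul_smul₀ ht₀.ne']

lemma OpL_congr_ae {a : V m × V m → ℂ} {u v : V m → ℂ} (huv : u =ᵐ[volume] v) :
    OpL m h a u = OpL m h a v := by
  ext x
  unfold OpL
  congr 1
  refine integral_congr_ae ?_
  filter_upwards [Measure.quasiMeasurePreserving_fst.ae_eq_comp huv] with p hp
  simp only [Function.comp_apply] at hp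
  rw [hp]

lemma integrable_slice_mul_proj (a b : 𝓢(V m × V m, ℂ)) (x : V m) :
    Integrable fun ξ => a (x, proj ξ) * b (proj x, ξ) :=
  (integrable_symbol_slice b (proj x)).bdd_mul (c := SchwartzMap.seminorm ℝ 0 0 a)
    (a.continuous.comp (by fun_prop)).aestronglyMeasurable
    (.of_forall fun ξ => a.norm_le_seminorm ℝ _)

lemma exists_eLpNorm_OpL_OpL_sub_le (a b : 𝓢(V m × V m, ℂ)) {c : V m × V m → ℂ}
    (hc : ∀ x ξ, c (x, ξ) = a (x, proj ξ) * b (proj x, ξ)) :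
    ∃ C > 0, ∀ h > 0, ∀ u : V m → ℂ, Measurable u → Integrable u →
      eLpNorm (fun x => OpL m h a (OpL m h b u) x - OpL m h c u x) 2 volume ≤
        ENNReal.ofReal (C * h ^ (1 / 2 : ℝ)) * eLpNorm u 2 volume := by
  have hN : finrank ℝ (V m) < m + 2 := by simp
  obtain ⟨A, hA, ha⟩ := exists_norm_symbolKernel_le a (m + 2)
    (hN.trans_le (by omega : m + 2 ≤ m + 2 + (m + 2) + 1))
  obtain ⟨A', hA', hb⟩ := exists_norm_symbolKernel_le b (m + 2) hN
  obtain ⟨B, hB, hlip⟩ := exists_norm_symbolKernel_sub_le b hN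
  obtain ⟨C, hC, hcomp⟩ := exists_eLpNorm_kernelOp_kernelOp_sub_le hN hA hA' hB
    (continuous_symbolKernel_apply a) ha (continuous_symbolKernel b) hb hlip
  refine ⟨C * √(2 * Real.pi), by positivity, fun h hh u hu hint => ?_⟩
  have hb' : OpL m h b u = kernelOp (2 * Real.pi * h) (symbolKernel b) u :=
    funext fun x => OpL_eq_kernelOp hh (integrable_symbol_slice b x) hint
  have hab (x : V m) : OpL m h a (OpL m h b u) x = kernelOp (2 * Real.pi * h) (symbolKernel a)
      (kernelOp (2 * Real.pi * h) (symbolKernel b) u) x := by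
    rw [hb', OpL_eq_kernelOp hh (integrable_symbol_slice a x)
      (integrable_kernelOp hN (by positivity) (continuous_symbolKernel b) hb hu hint)]
  have hc' (x : V m) : OpL m h c u x = kernelOp (2 * Real.pi * h)
      (compKernel 0 (symbolKernel a) (symbolKernel b)) u x := by
    rw [← symbolKernel_eq_compKernel_zero a b hc, OpL_eq_kernelOp hh _ hint]
    simpa only [hc] using integrable_slice_mul_proj a b x
  have hrate : C * (2 * Real.pi * h) / √((2 * Real.pi * h) ^ finrank ℝ ℝ) =
      C * √(2 * Real.pi) * h ^ (1 / 2 : ℝ) := by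
    rw [finrank_self, pow_one, mul_div_assoc, Real.div_sqrt, Real.sqrt_mul (by positivity),
      Real.sqrt_eq_rpow h, mul_assoc]
  simp only [hab, hc', ← hrate]
  exact hcomp _ (by positivity) u hu hint

end Quantization

theorem stmt_5_general (m : ℕ) (a b : SchwartzMap (V m × V m) ℂ) (c : V m × V m → ℂ)
    (hc : ∀ x ξ : V m, c (x, ξ) = a (x, (ξ.1, (0:ℝ))) * b ((x.1, (0:ℝ)), ξ)) :
    ∃ C > 0, ∀ h : ℝ, 0 < h → ∀ u : V m → ℂ, Integrable u →
      eLpNorm (fun x : V m => OpL m h a (OpL m h b u) x - OpL m h c u x) 2 volume ≤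
        ENNReal.ofReal (C * h ^ ((1:ℝ)/2)) * eLpNorm u 2 volume := by
  obtain ⟨C, hC, hle⟩ := exists_eLpNorm_OpL_OpL_sub_le a b hc
  refine ⟨C, hC, fun h hh u hu => ?_⟩
  obtain ⟨v, hv, huv⟩ := hu.1.aemeasurable
  rw [OpL_congr_ae huv, OpL_congr_ae huv, eLpNorm_congr_ae huv]
  exact hle h hh v hv (hu.congr huv)

end

/-- if `c(x,ξ) = a(x,ξ',0) b(x',0,ξ)` then
`‖(Op_h^Λ(a) ∘ Op_h^Λ(b))u − Op_h^Λ(c)u‖_{L²} ≤ C h^{1/2} ‖u‖_{L²}` for all `h ∈ (0,1]`. -/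
theorem stmt_5 (m : ℕ) (a b c : SchwartzMap (V m × V m) ℂ)
    (hc : ∀ x ξ : V m, c (x, ξ) = a (x, (ξ.1, (0:ℝ))) * b ((x.1, (0:ℝ)), ξ)) :
    ∃ C > 0, ∀ h : ℝ, 0 < h → h ≤ 1 → ∀ u : SchwartzMap (V m) ℂ,
      eLpNorm (fun x : V m => OpL m h ⇑a (OpL m h ⇑b ⇑u) x - OpL m h ⇑c ⇑u x) 2 volume ≤
        ENNReal.ofReal (C * h ^ ((1:ℝ)/2)) * eLpNorm (⇑u) 2 volume := by
  obtain ⟨C, hC, hle⟩ := stmt_5_general m a b c hc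
  exact ⟨C, hC, fun h hh _ u => hle h hh u u.integrable⟩
end
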